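/- arXiv:2403.09992 — 2 statements merged into one kernel-verified Lean document; each statement's English description precedes it below -/
import Mathlib

section
/- Let X be a geodesic metric space with basepoint o and let G be a countable group acting on X by isometries such that G contains two independent contracting isometries. Let μ be a non-elementary probability measure on G with L(μ) < ∞, and let (μ_i)_{i>0} be probability measures on G that converge simply to μ (i.e. μ_i(g) → μ(g) for every g ∈ G) and satisfy L(μ_i) → L(μ) (in particular L(μ_i) < ∞ for all large i). Then the escape rates converge: l(μ_i) → l(μ). -/
open Filter Topology Pointwise

/-- `f` parametrizes a geodesic from `x` to `y` by arclength on `[0, dist x y]`. -/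
def IsGeodesicSegment {X : Type*} [MetricSpace X] (f : ℝ → X) (x y : X) : Prop :=
  f 0 = x ∧ f (dist x y) = y ∧
    ∀ s ∈ Set.Icc (0 : ℝ) (dist x y), ∀ t ∈ Set.Icc (0 : ℝ) (dist x y),
      dist (f s) (f t) = |s - t|

/-- `X` is a geodesic metric space: any two points are joined by a geodesic. -/
def IsGeodesicSpace (X : Type*) [MetricSpace X] : Prop :=
  ∀ x y : X, ∃ f : ℝ → X, IsGeodesicSegment f x y

/-- Nearest-point projection of `x` to the set `A`. -/
def projSet {X : Type*} [MetricSpace X] (A : Set X) (x : X) : Set X :=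
  {a ∈ A | dist x a = Metric.infDist x A}

/-- Nearest-point projection of the set `B` to the set `A`. -/
def projSetOf {X : Type*} [MetricSpace X] (A B : Set X) : Set X :=
  ⋃ x ∈ B, projSet A x

/-- A `K`-quasigeodesic indexed by `ℤ`. -/
def IsQuasigeodesicZ {X : Type*} [MetricSpace X] (K : ℝ) (γ : ℤ → X) : Prop :=
  ∀ s t : ℤ, |(s : ℝ) - (t : ℝ)| / K - K ≤ dist (γ s) (γ t) ∧
    dist (γ s) (γ t) ≤ K * |(s : ℝ) - (t : ℝ)| + K

/-- A `K`-contracting axis indexed by `ℤ`: a `K`-quasigeodesic such that every geodesic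
staying `K`-far from it has nearest-point projection of diameter `< K`. -/
def IsContractingAxisZ {X : Type*} [MetricSpace X] (K : ℝ) (γ : ℤ → X) : Prop :=
  IsQuasigeodesicZ K γ ∧
    ∀ (f : ℝ → X) (x y : X), IsGeodesicSegment f x y →
      (∀ t ∈ Set.Icc (0 : ℝ) (dist x y), K ≤ Metric.infDist (f t) (Set.range γ)) →
      EMetric.diam (projSetOf (Set.range γ) (f '' Set.Icc (0 : ℝ) (dist x y)))
        < ENNReal.ofReal K

/-- The `ℤ`-orbit of the basepoint `o` under powers of `g`. -/
def zorbit {G X : Type*} [Group G] [MetricSpace X] [MulAction G X] (o : X) (g : G) : Set X :=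
  Set.range fun i : ℤ => g ^ i • o

/-- `g` is a contracting isometry: its orbit map `i ↦ g^i • o` is a `K`-contracting axis
for some `K > 1`. -/
def IsContractingIsom {G X : Type*} [Group G] [MetricSpace X] [MulAction G X]
    (o : X) (g : G) : Prop :=
  ∃ K : ℝ, 1 < K ∧ IsContractingAxisZ K fun i : ℤ => g ^ i • o

/-- `g` and `h` are independent contracting isometries: both are contracting, and the
nearest-point projections of each orbit to the other are bounded. -/
def IndependentPair {G X : Type*} [Group G] [MetricSpace X] [MulAction G X]
    (o : X) (g h : G) : Prop :=
  IsContractingIsom o g ∧ IsContractingIsom o h ∧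
    Bornology.IsBounded (projSetOf (zorbit o g) (zorbit o h)) ∧
    Bornology.IsBounded (projSetOf (zorbit o h) (zorbit o g))

/-- `G` contains two independent contracting isometries of `X`. -/
def HasIndepContracting (G : Type*) {X : Type*} [Group G] [MetricSpace X] [MulAction G X]
    (o : X) : Prop :=
  ∃ g h : G, IndependentPair o g h

/-- `μ` is a probability measure on the countable group `G`. -/
def IsProbMeasure {G : Type*} (μ : G → ℝ) : Prop :=
  (∀ g, 0 ≤ μ g) ∧ Summable μ ∧ ∑' g, μ g = 1

/-- Convolution of two (signed) measures on `G`. -/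
noncomputable def conv {G : Type*} [Group G] (μ ν : G → ℝ) : G → ℝ :=
  fun g => ∑' h : G, μ h * ν (h⁻¹ * g)

/-- `n`-fold convolution power of `μ`, with `convPow μ 0` the point mass at the identity. -/
noncomputable def convPow {G : Type*} [Group G] (μ : G → ℝ) : ℕ → G → ℝ
  | 0 => ({1} : Set G).indicator fun _ => (1 : ℝ)
  | n + 1 => conv μ (convPow μ n)

/-- First moment `L(μ) = ∑_g μ(g) d(o, g o)`. -/
noncomputable def firstMoment {G X : Type*} [Group G] [MetricSpace X] [MulAction G X]
    (o : X) (μ : G → ℝ) : ℝ :=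
  ∑' g : G, μ g * dist o (g • o)

/-- `μ` has finite first moment. -/
def HasFiniteFirstMoment {G X : Type*} [Group G] [MetricSpace X] [MulAction G X]
    (o : X) (μ : G → ℝ) : Prop :=
  Summable fun g : G => μ g * dist o (g • o)

/-- The escape rate `l(μ) = lim_n L(μ^{*n})/n`; by subadditivity of `n ↦ L(μ^{*n})`
(Fekete), the limit equals the infimum. -/
noncomputable def escapeRate {G X : Type*} [Group G] [MetricSpace X] [MulAction G X]
    (o : X) (μ : G → ℝ) : ℝ :=
  ⨅ n : ℕ, firstMoment o (convPow μ (n + 1)) / (n + 1 : ℝ)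

/-- `μ` is non-elementary: the sub-semigroup generated by its support contains
two independent contracting isometries. -/
def NonElementary {G X : Type*} [Group G] [MetricSpace X] [MulAction G X]
    (o : X) (μ : G → ℝ) : Prop :=
  ∃ g h : G, g ∈ Subsemigroup.closure {x : G | 0 < μ x} ∧
    h ∈ Subsemigroup.closure {x : G | 0 < μ x} ∧ IndependentPair o g h

section Geo

variable {X : Type*} [MetricSpace X]

lemma geo_near {K : ℝ} (hK : 0 < K) {A : Set X}
    (hne : ∀ x, (projSet A x).Nonempty)
    (hc : ∀ (f : ℝ → X) (x y : X), IsGeodesicSegment f x y →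
      (∀ t ∈ Set.Icc (0 : ℝ) (dist x y), K ≤ Metric.infDist (f t) A) →
      EMetric.diam (projSetOf A (f '' Set.Icc (0 : ℝ) (dist x y))) < ENNReal.ofReal K)
    {f : ℝ → X} {x y p q : X} (hf : IsGeodesicSegment f x y)
    (hp : p ∈ projSet A x) (hq : q ∈ projSet A y) (hpq : K ≤ dist p q) :
    ∃ t ∈ Set.Icc (0 : ℝ) (dist x y), dist (f t) p ≤ 2 * K := by
  obtain ⟨f0, f1, fi⟩ := hf
  have key : ∀ (z w : X) (T : ℝ), IsGeodesicSegment f z w → T = dist z w →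
      (∀ t ∈ Set.Icc (0 : ℝ) T, K ≤ Metric.infDist (f t) A) →
      ∀ a ∈ projSet A z, ∀ b ∈ projSet A w, dist a b < K := by
    intro z w T hg hT hfar a ha b hb
    subst hT
    have h1 := hc f z w hg hfar
    have ha' : a ∈ projSetOf A (f '' Set.Icc (0 : ℝ) (dist z w)) := by
      refine Set.mem_biUnion (x := z) ⟨0, ⟨le_rfl, dist_nonneg⟩, hg.1⟩ ha
    have hb' : b ∈ projSetOf A (f '' Set.Icc (0 : ℝ) (dist z w)) := by
      refine Set.mem_biUnion (x := w) ⟨dist z w, ⟨dist_nonneg, le_rfl⟩, hg.2.1⟩ hb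
    have h2 := lt_of_le_of_lt (Metric.edist_le_ediam_of_mem ha' hb') h1
    rw [edist_dist] at h2
    exact (ENNReal.ofReal_lt_ofReal_iff hK).1 h2
  set D := dist x y with hD
  have hD0 : 0 ≤ D := dist_nonneg
  let S : Set ℝ := {t ∈ Set.Icc (0 : ℝ) D | Metric.infDist (f t) A ≤ K}
  have hSne : S.Nonempty := by
    by_contra hS
    rw [Set.not_nonempty_iff_eq_empty] at hS
    have := key x y D ⟨f0, f1, fi⟩ hD (fun t ht => by
      by_contra hlt
      have : t ∈ S := ⟨ht, (not_le.1 hlt).le⟩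
      rw [hS] at this; exact this) p hp q hq
    linarith
  have hfc : ContinuousOn f (Set.Icc 0 D) := by
    apply LipschitzOnWith.continuousOn (K := 1)
    apply LipschitzOnWith.of_dist_le_mul
    intro s hs t ht
    rw [fi s hs t ht, Real.dist_eq]; simp
  have hSc : IsCompact S := by
    have : ContinuousOn (fun t => Metric.infDist (f t) A) (Set.Icc 0 D) :=
      (Metric.continuous_infDist_pt A).comp_continuousOn hfc
    have h2 : IsClosed S := by
      have := this.preimage_isClosed_of_isClosed isClosed_Icc (isClosed_Iic (a := K))
      exact this
    exact isCompact_Icc.of_isClosed_subset h2 (fun t ht => ht.1)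
  have ht0 : sInf S ∈ S := hSc.sInf_mem hSne
  set t0 := sInf S
  have hlow : ∀ t ∈ S, t0 ≤ t := fun t ht => csInf_le hSc.bddBelow ht
  refine ⟨t0, ht0.1, ?_⟩
  rcases eq_or_lt_of_le ht0.1.1 with h0 | h0
  · have h2 := ht0.2
    rw [← h0, f0] at h2 ⊢
    rw [hp.2]; linarith
  · have hd : dist x (f t0) = t0 := by
      rw [← f0, fi 0 ⟨le_rfl, hD0⟩ t0 ht0.1, zero_sub, abs_neg, abs_of_pos h0]
    have hfar : ∀ t ∈ Set.Ico (0 : ℝ) t0, K ≤ Metric.infDist (f t) A := by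
      intro t ht
      by_contra hlt
      have : t ∈ S := ⟨⟨ht.1, ht.2.le.trans ht0.1.2⟩, (not_le.1 hlt).le⟩
      have := hlow t this
      linarith [ht.2]
    have hfar0 : K ≤ Metric.infDist (f t0) A := by
      apply le_of_forall_pos_le_add
      intro ε hε
      let t := max 0 (t0 - ε)
      have htm : t ∈ Set.Ico (0 : ℝ) t0 := ⟨le_max_left _ _, max_lt h0 (by linarith)⟩
      have h1 := hfar t htm
      have h2 : Metric.infDist (f t) A ≤ Metric.infDist (f t0) A + dist (f t) (f t0) :=
        Metric.infDist_le_infDist_add_dist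
      rw [fi t ⟨htm.1, htm.2.le.trans ht0.1.2⟩ t0 ht0.1, abs_of_neg (by linarith [htm.2])] at h2
      have : t0 - ε ≤ t := le_max_right _ _
      linarith
    obtain ⟨r, hr⟩ := hne (f t0)
    have := key x (f t0) t0 ⟨f0, by rw [hd], fun s hs t ht => fi s
        ⟨hs.1, by rw [hd] at hs; exact hs.2.trans ht0.1.2⟩ t
        ⟨ht.1, by rw [hd] at ht; exact ht.2.trans ht0.1.2⟩⟩ hd.symm (by
          intro t ht
          rcases eq_or_lt_of_le ht.2 with h | h
          · rw [h]; exact hfar0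
          · exact hfar t ⟨ht.1, h⟩) p hp r hr
    have h3 : dist (f t0) r ≤ K := by rw [hr.2]; exact ht0.2
    have := dist_triangle (f t0) r p
    rw [dist_comm r p] at this
    linarith

lemma geo_ineq (hgeo : IsGeodesicSpace X) {K : ℝ} (hK : 0 < K) {A : Set X}
    (hne : ∀ x, (projSet A x).Nonempty)
    (hc : ∀ (f : ℝ → X) (x y : X), IsGeodesicSegment f x y →
      (∀ t ∈ Set.Icc (0 : ℝ) (dist x y), K ≤ Metric.infDist (f t) A) →
      EMetric.diam (projSetOf A (f '' Set.Icc (0 : ℝ) (dist x y))) < ENNReal.ofReal K)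
    {x y p q : X}
    (hp : p ∈ projSet A x) (hq : q ∈ projSet A y) (hpq : K ≤ dist p q) :
    dist x p + dist p y - 4 * K ≤ dist x y := by
  obtain ⟨f, hf⟩ := hgeo x y
  obtain ⟨t, ht, h⟩ := geo_near hK hne hc hf hp hq hpq
  obtain ⟨f0, f1, fi⟩ := hf
  have h1 : dist x (f t) = t := by
    rw [← f0, fi 0 ⟨le_rfl, dist_nonneg⟩ t ht, zero_sub, abs_neg, abs_of_nonneg ht.1]
  have h2 : dist (f t) y = dist x y - t := by
    conv_lhs => rw [← f1]
    rw [fi t ht _ ⟨dist_nonneg, le_rfl⟩, abs_of_nonpos (by linarith [ht.2])]; ring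
  have h3 := dist_triangle x (f t) p
  have h4 := dist_triangle p (f t) y
  rw [dist_comm p (f t)] at h4
  linarith

lemma proj_nonempty {K : ℝ} (hK : 1 < K) {γ : ℤ → X} (hγ : IsQuasigeodesicZ K γ) (x : X) :
    (projSet (Set.range γ) x).Nonempty := by
  let ρ := dist x (γ 0)
  let S : Set ℤ := {i | dist x (γ i) ≤ ρ}
  have hS : S.Finite := by
    apply (Set.finite_Icc (-⌈K * (2 * ρ + K)⌉) ⌈K * (2 * ρ + K)⌉).subset
    intro i hi
    have h1 := (hγ i 0).1
    have h2 : dist (γ i) (γ 0) ≤ 2 * ρ := by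
      have := dist_triangle (γ i) x (γ 0)
      rw [dist_comm (γ i) x] at this
      have hi' : dist x (γ i) ≤ ρ := hi
      linarith [show dist x (γ 0) = ρ from rfl]
    have h3 : |(i : ℝ)| ≤ K * (2 * ρ + K) := by
      simp only [Int.cast_zero, sub_zero] at h1
      have : |(i : ℝ)| / K ≤ 2 * ρ + K := by linarith
      rw [div_le_iff₀ (by linarith)] at this
      linarith
    have h4 := h3.trans (Int.le_ceil _)
    rw [abs_le] at h4
    constructor
    · exact_mod_cast h4.1
    · exact_mod_cast h4.2
  obtain ⟨i, hi, hmin⟩ := Set.exists_min_image S (fun i => dist x (γ i)) hS ⟨0, le_refl ρ⟩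
  refine ⟨γ i, ⟨i, rfl⟩, le_antisymm ?_ (Metric.infDist_le_dist_of_mem ⟨i, rfl⟩)⟩
  rw [Metric.le_infDist (Set.range_nonempty γ)]
  rintro _ ⟨j, rfl⟩
  by_cases hj : j ∈ S
  · exact hmin j hj
  · exact (show dist x (γ i) ≤ ρ from hi).trans (not_le.1 hj).le

lemma proj_self {A : Set X} {a : X} (ha : a ∈ A) : a ∈ projSet A a :=
  ⟨ha, by rw [dist_self, Metric.infDist_zero_of_mem ha]⟩

end Geo

section Geo2

variable {G X : Type*} [Group G] [MetricSpace X] [MulAction G X]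

lemma proj_equiv (o : X) (hiso : ∀ g : G, Isometry fun x : X => g • x) (g : G) (n : ℤ) {x p : X}
    (hp : p ∈ projSet (zorbit o g) x) : g ^ n • p ∈ projSet (zorbit o g) (g ^ n • x) := by
  obtain ⟨⟨i, rfl⟩, h⟩ := hp
  have himg : (fun x : X => g ^ n • x) '' zorbit o g = zorbit o g := by
    ext y
    constructor
    · rintro ⟨_, ⟨j, rfl⟩, rfl⟩
      exact ⟨n + j, by simp [zpow_add, mul_smul]⟩
    · rintro ⟨j, rfl⟩
      refine ⟨_, ⟨j - n, rfl⟩, ?_⟩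
      simp only [← mul_smul, ← zpow_add]
      congr 2; ring
  refine ⟨⟨n + i, by simp [zpow_add, mul_smul]⟩, ?_⟩
  rw [(hiso (g ^ n)).dist_eq, h]
  conv_rhs => rw [← himg]
  rw [Metric.infDist_image (hiso (g ^ n))]

/-- far projection on the `h` axis forces near projection on the `g` axis -/
lemma far_near (o : X) (hgeo : IsGeodesicSpace X) {g h : G} (hi : IndependentPair o g h) :
    ∃ R : ℝ, 0 < R ∧ ∀ x p r : X, p ∈ projSet (zorbit o h) x → r ∈ projSet (zorbit o g) x →
      R < dist o p → dist o r ≤ R := by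
  obtain ⟨⟨K1, hK1, hg⟩, ⟨K2, hK2, hh⟩, hb, -⟩ := hi
  obtain ⟨B, hB⟩ := hb.subset_closedBall o
  have hog : o ∈ zorbit o g := ⟨0, by simp⟩
  have hoh : o ∈ zorbit o h := ⟨0, by simp⟩
  have hB0 : 0 ≤ B := by
    have h1 : o ∈ projSetOf (zorbit o g) (zorbit o h) := Set.mem_biUnion hoh (proj_self hog)
    simpa using hB h1
  refine ⟨10 * K1 + 10 * K2 + 10 * B, by linarith, ?_⟩
  intro x p r hp hr hop
  by_contra hor
  rw [not_le] at hor
  obtain ⟨f, hf⟩ := hgeo x o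
  have hneg := proj_nonempty hK1 hg.1
  have hneh := proj_nonempty hK2 hh.1
  obtain ⟨t, ht, htp⟩ := geo_near (by linarith) hneh hh.2 hf hp (proj_self hoh)
    (by rw [dist_comm]; linarith)
  obtain ⟨s, hs, hsr⟩ := geo_near (by linarith) hneg hg.2 hf hr (proj_self hog)
    (by rw [dist_comm]; linarith)
  obtain ⟨p', hp'⟩ := hneg p
  have hp'o : dist o p' ≤ B := by
    have := hB (Set.mem_biUnion hp.1 hp')
    rw [dist_comm]; simpa using this
  have h1 := geo_ineq hgeo (by linarith) hneg hg.2 hp' (proj_self hr.1)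
    (by have := dist_triangle o p' r; linarith)
  have h2 := dist_triangle o p' p
  have h3 := dist_triangle o p' r
  rw [dist_comm p' p] at h2
  obtain ⟨f0, f1, fi⟩ := hf
  have hoi : ∀ u ∈ Set.Icc (0 : ℝ) (dist x o), dist (f u) o = dist x o - u := by
    intro u hu
    conv_lhs => rw [← f1]
    rw [fi u hu _ ⟨dist_nonneg, le_rfl⟩, abs_of_nonpos (by linarith [hu.2])]; ring
  have h4 := dist_triangle o (f t) p
  have h5 := dist_triangle o (f s) r
  rw [dist_comm o (f t), hoi t ht] at h4
  rw [dist_comm o (f s), hoi s hs] at h5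
  have h6 := dist_triangle4 p (f t) (f s) r
  rw [dist_comm p (f t), fi t ht s hs] at h6
  have h7 := dist_triangle o p (f t)
  have h8 := dist_triangle o r (f s)
  rw [dist_comm o (f t), hoi t ht, dist_comm p (f t)] at h7
  rw [dist_comm o (f s), hoi s hs, dist_comm r (f s)] at h8
  rcases abs_cases (t - s) with ⟨ha, _⟩ | ⟨ha, _⟩ <;> rw [ha] at h6 <;> linarith

lemma bad_count (o : X) (hgeo : IsGeodesicSpace X) (hiso : ∀ g : G, Isometry fun x : X => g • x)
    {g h : G} (hi : IndependentPair o g h) :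
    ∃ (R : ℝ) (M : ℕ), 0 < R ∧ ∀ x : X, ∃ k : ℤ, ∀ n : ℤ, (M : ℤ) < |n + k| →
      ∀ p ∈ projSet (zorbit o h) (g ^ n • x), dist o p ≤ R := by
  obtain ⟨R, hR, H⟩ := far_near o hgeo hi
  obtain ⟨⟨K1, hK1, hg⟩, -, -, -⟩ := hi
  refine ⟨R, ⌈K1 * (R + K1)⌉₊, hR, fun x => ?_⟩
  obtain ⟨r, hr⟩ := proj_nonempty hK1 hg.1 x
  obtain ⟨k, hk⟩ := hr.1
  refine ⟨k, fun n hn p hp => ?_⟩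
  by_contra hlt
  rw [not_le] at hlt
  have h1 := H _ p _ hp (proj_equiv o hiso g n hr) hlt
  have h2 := (hg.1 (n + k) 0).1
  simp only [zpow_add, mul_smul, zpow_zero, one_smul, Int.cast_zero, sub_zero] at h2
  simp only at hk
  rw [hk, dist_comm] at h2
  have h3 : |((n + k : ℤ) : ℝ)| ≤ K1 * (R + K1) := by
    have : |((n + k : ℤ) : ℝ)| / K1 ≤ R + K1 := by linarith
    rw [div_le_iff₀ (by linarith)] at this
    linarith
  have h4 := h3.trans (Nat.le_ceil _)
  have h5 : |n + k| ≤ (⌈K1 * (R + K1)⌉₊ : ℤ) := by exact_mod_cast h4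
  omega

lemma count_le (m M : ℕ) (c : ℤ) :
    ((Finset.range m).filter (fun i : ℕ => |c - i| ≤ (M : ℤ))).card ≤ 2 * M + 1 := by
  have h : (Finset.Icc (c - M) (c + M)).card = 2 * M + 1 := by
    rw [Int.card_Icc]; omega
  rw [← h]
  apply Finset.card_le_card_of_injOn (fun i : ℕ => (i : ℤ))
  · intro i hi
    have h2 := (Finset.mem_filter.1 (Finset.mem_coe.1 hi)).2
    rw [abs_le] at h2
    simp only [Finset.coe_Icc, Set.mem_Icc]
    omega
  · intro i _ j _ hij
    simpa using hij

lemma schottky (o : X) (hgeo : IsGeodesicSpace X) (hiso : ∀ g : G, Isometry fun x : X => g • x)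
    {g h : G} (hi : IndependentPair o g h) {δ : ℝ} (hδ : 0 < δ) :
    ∃ (b m : ℕ) (C : ℝ), 0 < b ∧ 0 < m ∧ ∀ x z : X,
      m * ((1 - δ) * dist o z - C) ≤ ∑ i ∈ Finset.range m,
        (dist x ((g ^ i * h ^ b * g ^ (m - i)) • z) - dist x ((g ^ i * h ^ b * g ^ (m - i)) • o)) := by
  obtain ⟨R, M, hR, H⟩ := bad_count o hgeo hiso hi
  obtain ⟨-, ⟨K, hK, hh⟩, -, -⟩ := hi
  have hd : ∀ (a : G) (x y : X), dist (a • x) (a • y) = dist x y := fun a x y => (hiso a).dist_eq x y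
  obtain ⟨b, hb⟩ := exists_nat_gt (K * (2 * R + K + K))
  obtain ⟨m, hm⟩ := exists_nat_gt (4 * (2 * M + 1) / δ)
  have hb0 : 0 < b := by
    have : (0 : ℝ) < b := lt_trans (by positivity) hb
    exact_mod_cast this
  have hm0 : 0 < m := by
    have : (0 : ℝ) < m := lt_trans (by positivity) hm
    exact_mod_cast this
  have hbn : 2 * R + K ≤ dist o (h ^ b • o) := by
    have h1 := (hh.1 b 0).1
    simp only [zpow_natCast, zpow_zero, one_smul, Int.cast_zero, sub_zero, Int.cast_natCast,
      Nat.abs_cast] at h1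
    rw [dist_comm] at h1
    have : 2 * R + K + K ≤ b / K := by
      rw [le_div_iff₀ (by linarith)]; linarith
    linarith
  set E := ∑ j ∈ Finset.range (m + 1), dist o (g ^ j • o) with hE
  have hEj : ∀ j ≤ m, dist o (g ^ j • o) ≤ E := fun j hj =>
    Finset.single_le_sum (f := fun j => dist o (g ^ j • o)) (fun _ _ => dist_nonneg)
      (Finset.mem_range.2 (by omega))
  have hE0 : 0 ≤ E := Finset.sum_nonneg (fun _ _ => dist_nonneg)
  set P := dist o (h ^ b • o) with hP
  refine ⟨b, m, 4 * K + 2 * R + 4 * E + 2 * P, hb0, hm0, fun x z => ?_⟩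
  obtain ⟨k1, hk1⟩ := H x
  obtain ⟨k2, hk2⟩ := H z
  let B1 := (Finset.range m).filter (fun i : ℕ => |k1 - i| ≤ (M : ℤ))
  let B2 := (Finset.range m).filter (fun i : ℕ => |(m + k2) - i| ≤ (M : ℤ))
  have hB : (((B1 ∪ B2).card : ℕ) : ℝ) ≤ 2 * (2 * M + 1) := by
    have : (B1 ∪ B2).card ≤ 2 * (2 * M + 1) :=
      (Finset.card_union_le _ _).trans (by
        have h1 : B1.card ≤ 2 * M + 1 := count_le m M k1
        have h2 : B2.card ≤ 2 * M + 1 := count_le m M (m + k2)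
        omega)
    exact_mod_cast this
  have hneh := proj_nonempty hK hh.1
  have hterm : ∀ i ∈ Finset.range m,
      (dist o z - (4 * K + 2 * R + 4 * E + 2 * P)) - (if i ∈ B1 ∪ B2 then 2 * dist o z else 0) ≤
      dist x ((g ^ i * h ^ b * g ^ (m - i)) • z) - dist x ((g ^ i * h ^ b * g ^ (m - i)) • o) := by
    intro i hi
    have him := Finset.mem_range.1 hi
    split_ifs with hbad
    · have h1 := dist_triangle x ((g ^ i * h ^ b * g ^ (m - i)) • z)
        ((g ^ i * h ^ b * g ^ (m - i)) • o)
      rw [hd, dist_comm z o] at h1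
      have : 0 ≤ P := dist_nonneg
      linarith
    · rw [Finset.mem_union, not_or] at hbad
      have hg1 : (M : ℤ) < |-(i : ℤ) + k1| := by
        by_contra hlt
        apply hbad.1
        refine Finset.mem_filter.2 ⟨hi, ?_⟩
        rw [not_lt] at hlt
        rwa [show k1 - (i : ℤ) = -(i : ℤ) + k1 by ring]
      have hg2 : (M : ℤ) < |((m - i : ℕ) : ℤ) + k2| := by
        by_contra hlt
        apply hbad.2
        refine Finset.mem_filter.2 ⟨hi, ?_⟩
        rw [not_lt] at hlt
        rw [Nat.cast_sub him.le] at hlt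
        rwa [show (m : ℤ) + k2 - i = m - i + k2 by ring]
      set x' := g ^ (-(i : ℤ)) • x with hx'
      set z' := g ^ (((m - i : ℕ) : ℤ)) • z with hz'
      obtain ⟨p, hp⟩ := hneh x'
      obtain ⟨q, hq⟩ := hneh z'
      have hpR := hk1 _ hg1 p hp
      have hqR := hk2 _ hg2 q hq
      have hq' := proj_equiv o hiso h b hq
      rw [zpow_natCast] at hq'
      have e1 := dist_triangle4 o p (h ^ b • q) (h ^ b • o)
      rw [hd, dist_comm q o] at e1
      have e2 := geo_ineq hgeo (by linarith) hneh hh.2 hp hq' (by linarith)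
      have e3 : dist x ((g ^ i * h ^ b * g ^ (m - i)) • z) = dist x' (h ^ b • z') := by
        rw [hx', hz', ← hd (g ^ i) (g ^ (-(i : ℤ)) • x)]
        simp [mul_smul]
      have e4 : dist x (g ^ i • o) = dist x' o := by
        rw [hx', ← hd (g ^ i) (g ^ (-(i : ℤ)) • x)]
        simp
      have e5 := hEj i him.le
      have e6 := hEj (m - i) (by omega)
      have e7 := dist_triangle x (g ^ i • o) o
      rw [e4, dist_comm (g ^ i • o) o] at e7
      have e8 := dist_triangle x' p o
      rw [dist_comm p o] at e8
      have e9 := dist_triangle4 (h ^ b • o) o p (h ^ b • z')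
      rw [hd, dist_comm (h ^ b • o) o] at e9
      have e10 := dist_triangle (g ^ (m - i) • o) o z'
      rw [hz', zpow_natCast, hd, dist_comm (g ^ (m - i) • o) o] at e10
      rw [hz', zpow_natCast] at e9 e2 e3
      have e11 : dist x ((g ^ i * h ^ b * g ^ (m - i)) • o) ≤ dist x o + E + P + E := by
        have f1 := dist_triangle x o ((g ^ i * h ^ b * g ^ (m - i)) • o)
        have f2 := dist_triangle4 o (g ^ i • o) (g ^ i • h ^ b • o) (g ^ i • h ^ b • g ^ (m - i) • o)
        rw [hd, hd, hd] at f2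
        rw [mul_smul, mul_smul] at f1 ⊢
        linarith
      linarith
  refine le_trans ?_ (Finset.sum_le_sum hterm)
  rw [Finset.sum_sub_distrib, Finset.sum_const, Finset.card_range, nsmul_eq_mul]
  have hsum : ∑ i ∈ Finset.range m, (if i ∈ B1 ∪ B2 then 2 * dist o z else 0) =
      (B1 ∪ B2).card * (2 * dist o z) := by
    rw [← Finset.sum_filter, Finset.sum_const, nsmul_eq_mul]
    congr 3
    ext i
    simp only [Finset.mem_filter, Finset.mem_range, B1, B2, Finset.mem_union]
    tauto
  rw [hsum]
  have hz0 : 0 ≤ dist o z := dist_nonneg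
  have f1 : ((B1 ∪ B2).card : ℝ) * (2 * dist o z) ≤ 2 * (2 * M + 1) * (2 * dist o z) :=
    mul_le_mul_of_nonneg_right hB (by linarith)
  have f2 : 4 * (2 * (M : ℝ) + 1) ≤ m * δ := by
    rw [div_lt_iff₀ hδ] at hm; exact hm.le
  have f3 := mul_le_mul_of_nonneg_right f2 hz0
  linarith

end Geo2
section Prob

variable {G X : Type*} [Group G] [MetricSpace X] [MulAction G X]

/-- weight function -/
noncomputable def wt (o : X) (g : G) : ℝ := 1 + dist o (g • o)

/-- weighted summability -/
def WS (o : X) (u : G → ℝ) : Prop := Summable fun g => |u g| * wt o g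

/-- weighted norm -/
noncomputable def wn (o : X) (u : G → ℝ) : ℝ := ∑' g, |u g| * wt o g

lemma wt_one_le (o : X) (g : G) : 1 ≤ wt o g := by
  unfold wt; linarith [dist_nonneg (x := o) (y := g • o)]

lemma wt_pos (o : X) (g : G) : 0 < wt o g := lt_of_lt_of_le one_pos (wt_one_le o g)

lemma wt_mul (o : X) (hiso : ∀ g : G, Isometry fun x : X => g • x) (g h : G) :
    wt o (g * h) ≤ wt o g * wt o h := by
  have h1 := dist_triangle o (g • o) (g • h • o)
  have h2 : dist (g • o) (g • h • o) = dist o (h • o) := (hiso g).dist_eq _ _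
  have h3 := mul_nonneg (dist_nonneg (x := o) (y := g • o)) (dist_nonneg (x := o) (y := h • o))
  unfold wt
  rw [mul_smul]
  nlinarith

lemma wn_nonneg (o : X) (u : G → ℝ) : 0 ≤ wn o u :=
  tsum_nonneg fun g => mul_nonneg (abs_nonneg _) (wt_pos o g).le

lemma WS.sub {o : X} {u v : G → ℝ} (hu : WS o u) (hv : WS o v) : WS o (u - v) := by
  refine Summable.of_nonneg_of_le (fun g => mul_nonneg (abs_nonneg _) (wt_pos o g).le) (fun g => ?_)
    (Summable.add hu hv)
  rw [← add_mul]
  exact mul_le_mul_of_nonneg_right (abs_sub _ _) (wt_pos o g).le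

lemma WS.abs {o : X} {u : G → ℝ} (hu : WS o u) : WS o (fun g => |u g|) := by
  unfold WS at *; simpa using hu

lemma WS.summable_mul {o : X} {u : G → ℝ} (hu : WS o u) {F : G → ℝ} {c : ℝ}
    (hF : ∀ g, |F g| ≤ c * wt o g) : Summable fun g => u g * F g := by
  refine Summable.of_norm_bounded (Summable.mul_left c hu) (fun g => ?_)
  rw [Real.norm_eq_abs, abs_mul]
  calc |u g| * |F g| ≤ |u g| * (c * wt o g) := mul_le_mul_of_nonneg_left (hF g) (abs_nonneg _)
    _ = _ := by ring

lemma WS.abs_tsum_le {o : X} {u : G → ℝ} (hu : WS o u) {F : G → ℝ} {c : ℝ}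
    (hF : ∀ g, |F g| ≤ c * wt o g) : |∑' g, u g * F g| ≤ c * wn o u := by
  rw [wn, ← tsum_mul_left, ← Real.norm_eq_abs]
  refine tsum_of_norm_bounded (Summable.mul_left c hu).hasSum (fun g => ?_)
  rw [Real.norm_eq_abs, abs_mul]
  calc |u g| * |F g| ≤ |u g| * (c * wt o g) := mul_le_mul_of_nonneg_left (hF g) (abs_nonneg _)
    _ = _ := by ring

lemma trans_bd {o : X} (hiso : ∀ g : G, Isometry fun x : X => g • x) {F : G → ℝ} {c : ℝ}
    (hF : ∀ g, |F g| ≤ c * wt o g) (h : G) : ∀ k, |F (h * k)| ≤ (c * wt o h) * wt o k := by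
  intro k
  have hc : 0 ≤ c := by
    have := (abs_nonneg _).trans (hF 1)
    exact nonneg_of_mul_nonneg_left this (wt_pos o 1)
  calc |F (h * k)| ≤ c * wt o (h * k) := hF _
    _ ≤ c * (wt o h * wt o k) := mul_le_mul_of_nonneg_left (wt_mul o hiso h k) hc
    _ = _ := by ring

lemma conv_summable {o : X} (hiso : ∀ g : G, Isometry fun x : X => g • x) {u v : G → ℝ}
    (hu : WS o u) (hv : WS o v) {F : G → ℝ} {c : ℝ} (hF : ∀ g, |F g| ≤ c * wt o g) :
    Summable fun p : G × G => u p.1 * (v p.2 * F (p.1 * p.2)) := by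
  have h1 : Summable fun p : G × G => (|u p.1| * wt o p.1) * (|v p.2| * wt o p.2) :=
    Summable.mul_of_nonneg hu hv (fun g => mul_nonneg (abs_nonneg _) (wt_pos o g).le)
      (fun g => mul_nonneg (abs_nonneg _) (wt_pos o g).le)
  refine Summable.of_norm_bounded (h1.mul_left c) (fun p => ?_)
  rw [Real.norm_eq_abs, abs_mul, abs_mul]
  calc |u p.1| * (|v p.2| * |F (p.1 * p.2)|)
      ≤ |u p.1| * (|v p.2| * ((c * wt o p.1) * wt o p.2)) := by
        have := trans_bd hiso hF p.1 p.2
        gcongr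
    _ = _ := by ring

/-- the shear `(g, h) ↦ (h, h⁻¹ g)` -/
def shear (G : Type*) [Group G] : G × G ≃ G × G where
  toFun p := (p.2, p.2⁻¹ * p.1)
  invFun p := (p.1 * p.2, p.1)
  left_inv p := by simp
  right_inv p := by simp

lemma conv_summable' {o : X} (hiso : ∀ g : G, Isometry fun x : X => g • x) {u v : G → ℝ}
    (hu : WS o u) (hv : WS o v) {F : G → ℝ} {c : ℝ} (hF : ∀ g, |F g| ≤ c * wt o g) :
    Summable fun p : G × G => u p.2 * v (p.2⁻¹ * p.1) * F p.1 := by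
  have h := (shear G).summable_iff.2 (conv_summable hiso hu hv hF)
  refine h.congr (fun p => ?_)
  simp [shear, mul_assoc]

lemma conv_sum {o : X} (hiso : ∀ g : G, Isometry fun x : X => g • x) {u v : G → ℝ}
    (hu : WS o u) (hv : WS o v) {F : G → ℝ} {c : ℝ} (hF : ∀ g, |F g| ≤ c * wt o g) :
    Summable (fun g => conv u v g * F g) ∧
    ∑' g, conv u v g * F g = ∑' h, u h * ∑' k, v k * F (h * k) := by
  have h1 := conv_summable hiso hu hv hF
  have h2 := conv_summable' hiso hu hv hF
  have e : ∀ g, conv u v g * F g = ∑' h, u h * v (h⁻¹ * g) * F g := by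
    intro g; rw [conv, tsum_mul_right]
  simp only [e]
  refine ⟨h2.prod, ?_⟩
  rw [← h2.tsum_prod]
  simp only [← tsum_mul_left]
  rw [← h1.tsum_prod, ← (shear G).tsum_eq (fun p : G × G => u p.1 * (v p.2 * F (p.1 * p.2)))]
  refine tsum_congr (fun p => ?_)
  simp [shear, mul_assoc]

lemma conv_fiber {o : X} (hiso : ∀ g : G, Isometry fun x : X => g • x) {u v : G → ℝ}
    (hu : WS o u) (hv : WS o v) (g : G) : Summable fun h => u h * v (h⁻¹ * g) := by
  have := (conv_summable' hiso hu hv (F := fun _ => 1) (c := 1)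
    (fun g => by simpa using wt_one_le o g)).prod_factor g
  simpa using this

lemma conv_wn {o : X} (hiso : ∀ g : G, Isometry fun x : X => g • x) {u v : G → ℝ}
    (hu : WS o u) (hv : WS o v) : WS o (conv u v) ∧ wn o (conv u v) ≤ wn o u * wn o v := by
  have hW : ∀ g : G, |wt o g| ≤ 1 * wt o g := fun g => by rw [abs_of_pos (wt_pos o g), one_mul]
  obtain ⟨h1, h2⟩ := conv_sum hiso hu.abs hv.abs (F := wt o) hW
  have hle : ∀ g, |conv u v g| * wt o g ≤ conv (fun g => |u g|) (fun g => |v g|) g * wt o g := by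
    intro g
    refine mul_le_mul_of_nonneg_right ?_ (wt_pos o g).le
    unfold conv
    have h3 := (conv_fiber hiso hu.abs hv.abs g).hasSum
    rw [← Real.norm_eq_abs]
    refine tsum_of_norm_bounded h3 (fun h => ?_)
    rw [Real.norm_eq_abs, abs_mul]
  have hs : WS o (conv u v) := Summable.of_nonneg_of_le
    (fun g => mul_nonneg (abs_nonneg _) (wt_pos o g).le) hle h1
  refine ⟨hs, (hs.tsum_le_tsum hle h1).trans ?_⟩
  rw [h2]
  have hin : ∀ h, ∑' k, |v k| * wt o (h * k) ≤ wt o h * wn o v := by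
    intro h
    have := hv.abs.abs_tsum_le (trans_bd hiso hW h)
    have h5 := (le_abs_self _).trans this
    simpa [wn] using h5
  have hin0 : ∀ h, 0 ≤ ∑' k, |v k| * wt o (h * k) := fun h =>
    tsum_nonneg fun k => mul_nonneg (abs_nonneg _) (wt_pos o _).le
  have hr : Summable fun h => |u h| * wt o h * wn o v := Summable.mul_right _ hu
  have hle2 : ∀ h, |u h| * ∑' k, |v k| * wt o (h * k) ≤ |u h| * wt o h * wn o v := by
    intro h
    rw [mul_assoc]
    exact mul_le_mul_of_nonneg_left (hin h) (abs_nonneg _)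
  calc _ ≤ ∑' h, |u h| * wt o h * wn o v :=
        (Summable.of_nonneg_of_le (fun h => mul_nonneg (abs_nonneg _) (hin0 h)) hle2
          hr).tsum_le_tsum hle2 hr
    _ = _ := by rw [tsum_mul_right]; rfl

lemma WS.add {o : X} {u v : G → ℝ} (hu : WS o u) (hv : WS o v) :
    wn o (u + v) ≤ wn o u + wn o v := by
  have h : ∀ g, |(u + v) g| * wt o g ≤ |u g| * wt o g + |v g| * wt o g := fun g => by
    rw [← add_mul]
    exact mul_le_mul_of_nonneg_right (abs_add_le _ _) (wt_pos o g).le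
  have h1 : Summable fun g => |u g| * wt o g + |v g| * wt o g := Summable.add hu hv
  have h2 : Summable fun g => |(u + v) g| * wt o g :=
    Summable.of_nonneg_of_le (fun g => mul_nonneg (abs_nonneg _) (wt_pos o g).le) h h1
  unfold wn
  rw [← Summable.tsum_add hu hv]
  exact h2.tsum_le_tsum h h1

lemma conv_diff {o : X} (hiso : ∀ g : G, Isometry fun x : X => g • x) {u v u' v' : G → ℝ}
    (hu : WS o u) (hv : WS o v) (hu' : WS o u') (hv' : WS o v') :
    wn o (conv u' v' - conv u v) ≤
      wn o (u' - u) * (wn o (v' - v) + wn o v) + wn o u * wn o (v' - v) := by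
  have e : conv u' v' - conv u v = conv (u' - u) v' + conv u (v' - v) := by
    ext g
    simp only [conv, Pi.sub_apply, Pi.add_apply]
    have a1 := conv_fiber hiso hu' hv' g
    have a2 := conv_fiber hiso hu hv g
    have a3 := conv_fiber hiso hu hv' g
    have b1 : ∑' h, (u' h - u h) * v' (h⁻¹ * g) =
        ∑' h, u' h * v' (h⁻¹ * g) - ∑' h, u h * v' (h⁻¹ * g) := by
      rw [← a1.tsum_sub a3]; exact tsum_congr fun h => by ring
    have b2 : ∑' h, u h * (v' (h⁻¹ * g) - v (h⁻¹ * g)) =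
        ∑' h, u h * v' (h⁻¹ * g) - ∑' h, u h * v (h⁻¹ * g) := by
      rw [← a3.tsum_sub a2]; exact tsum_congr fun h => by ring
    rw [b1, b2]; ring
  obtain ⟨c1, c2⟩ := conv_wn hiso (hu'.sub hu) hv'
  obtain ⟨c3, c4⟩ := conv_wn hiso hu (hv'.sub hv)
  rw [e]
  refine (WS.add c1 c3).trans (add_le_add (c2.trans ?_) c4)
  refine mul_le_mul_of_nonneg_left ?_ (wn_nonneg _ _)
  have := WS.add (hv'.sub hv) hv
  simpa using this

lemma WS_convPow {o : X} (hiso : ∀ g : G, Isometry fun x : X => g • x) {μ : G → ℝ}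
    (hμ : WS o μ) : ∀ n, WS o (convPow μ n)
  | 0 => by
    refine summable_of_ne_finset_zero (s := {1}) (fun g hg => ?_)
    have : g ≠ 1 := by simpa using hg
    simp [convPow, this]
  | n + 1 => (conv_wn hiso hμ (WS_convPow hiso hμ n)).1

lemma convPow_nonneg {μ : G → ℝ} (hμ : ∀ g, 0 ≤ μ g) : ∀ n g, 0 ≤ convPow μ n g
  | 0, g => Set.indicator_nonneg (fun _ _ => zero_le_one) g
  | n + 1, g => tsum_nonneg fun h => mul_nonneg (hμ h) (convPow_nonneg hμ n _)

lemma tsum_ind (a : G) (Q : G → ℝ) :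
    ∑' h, ({a} : Set G).indicator (fun _ => (1 : ℝ)) h * Q h = Q a := by
  rw [tsum_eq_single a]
  · simp
  · intro b hb; simp [hb]

lemma one_bd (o : X) : ∀ g : G, |(fun _ : G => (1 : ℝ)) g| ≤ 1 * wt o g := fun g => by
  simpa using wt_one_le o g

lemma convPow_sum {o : X} (hiso : ∀ g : G, Isometry fun x : X => g • x) {μ : G → ℝ}
    (hμ : WS o μ) (h1 : ∑' g, μ g = 1) : ∀ n, ∑' g, convPow μ n g = 1
  | 0 => by
    have := tsum_ind (1 : G) (fun _ => 1)
    simpa [convPow] using this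
  | n + 1 => by
    have := (conv_sum hiso hμ (WS_convPow hiso hμ n) (one_bd o)).2
    simpa [convPow, convPow_sum hiso hμ h1 n, h1] using this

lemma convPow_add_sum {o : X} (hiso : ∀ g : G, Isometry fun x : X => g • x) {μ : G → ℝ}
    (hμ : WS o μ) (m n : ℕ) : ∀ {F : G → ℝ} {c : ℝ}, (∀ g, |F g| ≤ c * wt o g) →
    ∑' g, convPow μ (m + n) g * F g =
      ∑' h, convPow μ m h * ∑' k, convPow μ n k * F (h * k) := by
  induction m with
  | zero =>
    intro F c hF
    simp only [convPow, Nat.zero_add]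
    rw [tsum_ind]; simp
  | succ m ih =>
    intro F c hF
    have e : m + 1 + n = (m + n) + 1 := by ring
    rw [e]
    simp only [convPow]
    rw [(conv_sum hiso hμ (WS_convPow hiso hμ (m + n)) hF).2]
    rw [(conv_sum hiso hμ (WS_convPow hiso hμ m) (c := c * wn o (convPow μ n)) ?_).2]
    · refine tsum_congr fun h => ?_
      rw [ih (trans_bd hiso hF h)]
      simp only [mul_assoc]
    · intro g
      refine ((WS_convPow hiso hμ n).abs_tsum_le (trans_bd hiso hF g)).trans (le_of_eq ?_)
      ring

lemma convPow_mul_pos {o : X} (hiso : ∀ g : G, Isometry fun x : X => g • x) {μ : G → ℝ}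
    (hμ : WS o μ) (h0 : ∀ g, 0 ≤ μ g) {m n : ℕ} {g h : G} (hg : 0 < convPow μ m g)
    (hh : 0 < convPow μ n h) : 0 < convPow μ (m + n) (g * h) := by
  classical
  let F : G → ℝ := ({g * h} : Set G).indicator fun _ => (1 : ℝ)
  have hF0 : ∀ x, 0 ≤ F x := Set.indicator_nonneg (fun _ _ => zero_le_one)
  have hF1 : ∀ x, |F x| ≤ 1 * wt o x := by
    intro x
    rw [abs_of_nonneg (hF0 x), one_mul]
    refine le_trans ?_ (wt_one_le o x)
    exact Set.indicator_le_self' (fun _ _ => zero_le_one) x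
  have hk := convPow_add_sum hiso hμ m n hF1
  have e1 : ∑' x, convPow μ (m + n) x * F x = convPow μ (m + n) (g * h) := by
    rw [← tsum_ind (g * h) (convPow μ (m + n))]
    exact tsum_congr fun x => mul_comm _ _
  rw [e1] at hk
  rw [hk]
  have hbd : ∀ x, |∑' k, convPow μ n k * F (x * k)| ≤ (1 * wn o (convPow μ n)) * wt o x := by
    intro x
    refine ((WS_convPow hiso hμ n).abs_tsum_le (trans_bd hiso hF1 x)).trans (le_of_eq ?_)
    ring
  have hnn : ∀ x, 0 ≤ ∑' k, convPow μ n k * F (x * k) := fun x =>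
    tsum_nonneg fun k => mul_nonneg (convPow_nonneg h0 n k) (hF0 _)
  refine ((WS_convPow hiso hμ m).summable_mul hbd).tsum_pos
    (fun x => mul_nonneg (convPow_nonneg h0 m x) (hnn x)) g (mul_pos hg ?_)
  refine ((WS_convPow hiso hμ n).summable_mul (trans_bd hiso hF1 g)).tsum_pos
    (fun x => mul_nonneg (convPow_nonneg h0 n x) (hF0 _)) h (mul_pos hh ?_)
  simp [F]

lemma convPow_pow_pos {o : X} (hiso : ∀ g : G, Isometry fun x : X => g • x) {μ : G → ℝ}
    (hμ : WS o μ) (h0 : ∀ g, 0 ≤ μ g) {p : ℕ} {g : G} (hg : 0 < convPow μ p g) :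
    ∀ i : ℕ, 0 < convPow μ (p * i) (g ^ i)
  | 0 => by simp [convPow]
  | i + 1 => by
    rw [pow_succ, Nat.mul_succ]
    exact convPow_mul_pos hiso hμ h0 (convPow_pow_pos hiso hμ h0 hg i) hg

lemma closure_pos {o : X} (hiso : ∀ g : G, Isometry fun x : X => g • x) {μ : G → ℝ}
    (hμ : WS o μ) (h0 : ∀ g, 0 ≤ μ g) {g : G} (hg : g ∈ Subsemigroup.closure {x : G | 0 < μ x}) :
    ∃ p : ℕ, 0 < p ∧ 0 < convPow μ p g := by
  induction hg using Subsemigroup.closure_induction with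
  | mem x hx =>
    refine ⟨1, one_pos, ?_⟩
    have : convPow μ 1 x = μ x := by
      simp only [convPow, conv]
      rw [tsum_eq_single x]
      · simp
      · intro b hb
        have : b⁻¹ * x ≠ 1 := by
          intro h; exact hb (inv_mul_eq_one.1 h)
        simp [this]
    rw [this]; exact hx
  | mul x y _ _ hx hy =>
    obtain ⟨p, hp, hx⟩ := hx
    obtain ⟨q, hq, hy⟩ := hy
    exact ⟨p + q, by omega, convPow_mul_pos hiso hμ h0 hx hy⟩

end Prob
section Drift

variable {G X : Type*} [Group G] [MetricSpace X] [MulAction G X]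

/-- expected displacement seen from `x` -/
noncomputable def drift (o : X) (μ : G → ℝ) (n : ℕ) (x : X) : ℝ :=
  ∑' g, convPow μ n g * (dist x (g • o) - dist x o)

lemma WS_of (o : X) {μ : G → ℝ} (hμ : IsProbMeasure μ) (hL : HasFiniteFirstMoment o μ) :
    WS o μ := by
  unfold WS
  refine (hμ.2.1.add hL).congr (fun g => ?_)
  rw [abs_of_nonneg (hμ.1 g), wt]; ring

lemma disp_bd (o x : X) : ∀ g : G, |dist x (g • o) - dist x o| ≤ 1 * wt o g := by
  intro g
  have h1 := dist_triangle x o (g • o)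
  have h2 := dist_triangle x (g • o) o
  rw [dist_comm (g • o) o] at h2
  unfold wt
  rw [abs_le]; constructor <;> linarith

lemma fm_eq_drift (o : X) (μ : G → ℝ) (n : ℕ) : firstMoment o (convPow μ n) = drift o μ n o := by
  simp [firstMoment, drift]

lemma fm_bd (o : X) : ∀ g : G, |dist o (g • o)| ≤ 1 * wt o g := by
  intro g
  rw [abs_of_nonneg dist_nonneg]; unfold wt; linarith

variable {o : X} {μ : G → ℝ}

lemma drift_le (hiso : ∀ g : G, Isometry fun x : X => g • x) (hW : WS o μ) (h0 : ∀ g, 0 ≤ μ g)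
    (n : ℕ) (x : X) : drift o μ n x ≤ firstMoment o (convPow μ n) := by
  refine ((WS_convPow hiso hW n).summable_mul (disp_bd o x)).tsum_le_tsum (fun g => ?_)
    ((WS_convPow hiso hW n).summable_mul (fm_bd o))
  refine mul_le_mul_of_nonneg_left ?_ (convPow_nonneg h0 n g)
  linarith [dist_triangle x o (g • o)]

lemma le_drift (hiso : ∀ g : G, Isometry fun x : X => g • x) (hW : WS o μ) (h0 : ∀ g, 0 ≤ μ g)
    (n : ℕ) (x : X) : -firstMoment o (convPow μ n) ≤ drift o μ n x := by
  unfold firstMoment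
  rw [← tsum_neg]
  refine ((WS_convPow hiso hW n).summable_mul (fm_bd o)).neg.tsum_le_tsum (fun g => ?_)
    ((WS_convPow hiso hW n).summable_mul (disp_bd o x))
  rw [← mul_neg]
  refine mul_le_mul_of_nonneg_left ?_ (convPow_nonneg h0 n g)
  have := dist_triangle x (g • o) o
  rw [dist_comm (g • o) o] at this
  linarith

lemma fm_nonneg (h0 : ∀ g, 0 ≤ μ g) (n : ℕ) : 0 ≤ firstMoment o (convPow μ n) :=
  tsum_nonneg fun g => mul_nonneg (convPow_nonneg h0 n g) dist_nonneg

lemma drift_shift (hiso : ∀ g : G, Isometry fun x : X => g • x) (hW : WS o μ)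
    (n : ℕ) (x : X) (h : G) :
    drift o μ n (h⁻¹ • x) = ∑' k, convPow μ n k * (dist x (h • k • o) - dist x (h • o)) := by
  refine tsum_congr fun k => ?_
  have e : ∀ y : X, dist (h⁻¹ • x) y = dist x (h • y) := fun y => by
    rw [← (hiso h).dist_eq (h⁻¹ • x) y]; simp
  rw [e, e]

lemma drift_inv_bd (hiso : ∀ g : G, Isometry fun x : X => g • x) (hW : WS o μ)
    (h0 : ∀ g, 0 ≤ μ g) (n : ℕ) (x : X) :
    ∀ h : G, |drift o μ n (h⁻¹ • x)| ≤ firstMoment o (convPow μ n) * wt o h := by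
  intro h
  have h1 := drift_le hiso hW h0 n (h⁻¹ • x)
  have h2 := le_drift hiso hW h0 n (h⁻¹ • x)
  refine (abs_le.2 ⟨h2, h1⟩).trans ?_
  exact le_mul_of_one_le_right (fm_nonneg h0 n) (wt_one_le o h)

lemma drift_add (hiso : ∀ g : G, Isometry fun x : X => g • x) (hW : WS o μ)
    (h0 : ∀ g, 0 ≤ μ g) (h1 : ∑' g, μ g = 1) (m n : ℕ) (x : X) :
    drift o μ (m + n) x = drift o μ m x + ∑' h, convPow μ m h * drift o μ n (h⁻¹ • x) := by
  have hin : ∀ h : G, ∑' k, convPow μ n k * (dist x ((h * k) • o) - dist x o) =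
      (dist x (h • o) - dist x o) + drift o μ n (h⁻¹ • x) := by
    intro h
    have s1 := (WS_convPow hiso hW n).summable_mul (F := fun _ => (dist x (h • o) - dist x o))
      (c := |dist x (h • o) - dist x o|)
      (fun g => le_mul_of_one_le_right (abs_nonneg _) (wt_one_le o g))
    have s2 := (WS_convPow hiso hW n).summable_mul (disp_bd o (h⁻¹ • x))
    have e1 : ∑' k, convPow μ n k * (dist x (h • o) - dist x o) = dist x (h • o) - dist x o := by
      rw [tsum_mul_right, convPow_sum hiso hW h1 n, one_mul]
    rw [← e1, drift, ← s1.tsum_add s2]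
    refine tsum_congr fun k => ?_
    have e : ∀ y : X, dist (h⁻¹ • x) y = dist x (h • y) := fun y => by
      rw [← (hiso h).dist_eq (h⁻¹ • x) y]; simp
    rw [e, e, mul_smul]; ring
  rw [drift, convPow_add_sum hiso hW m n (disp_bd o x)]
  simp only [hin]
  rw [drift.eq_def o μ m x]
  rw [← Summable.tsum_add ((WS_convPow hiso hW m).summable_mul (disp_bd o x))
    ((WS_convPow hiso hW m).summable_mul (drift_inv_bd hiso hW h0 n x))]
  refine tsum_congr fun k => ?_
  ring

lemma avg_ge (hiso : ∀ g : G, Isometry fun x : X => g • x) (hW : WS o μ)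
    (h0 : ∀ g, 0 ≤ μ g) (h1 : ∑' g, μ g = 1) (m n : ℕ) (x : X) {s : ℝ}
    (hs : ∀ y, s ≤ drift o μ n y) : s ≤ ∑' h, convPow μ m h * drift o μ n (h⁻¹ • x) := by
  have hsm := WS_convPow hiso hW m
  have e1 : ∑' k, convPow μ m k * s = s := by
    rw [tsum_mul_right, convPow_sum hiso hW h1 m, one_mul]
  rw [← e1]
  refine (hsm.summable_mul (F := fun _ => s) (c := |s|)
      (fun g => le_mul_of_one_le_right (abs_nonneg _) (wt_one_le o g))).tsum_le_tsum (fun h => ?_)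
      (hsm.summable_mul (drift_inv_bd hiso hW h0 n x))
  exact mul_le_mul_of_nonneg_left (hs _) (convPow_nonneg h0 m h)

lemma drift_super (hiso : ∀ g : G, Isometry fun x : X => g • x) (hW : WS o μ)
    (h0 : ∀ g, 0 ≤ μ g) (h1 : ∑' g, μ g = 1) (n : ℕ) {s : ℝ}
    (hs : ∀ y, s ≤ drift o μ n y) : ∀ (k : ℕ) (x : X), k * s ≤ drift o μ (n * k) x
  | 0, x => by
    simp only [drift, Nat.mul_zero, convPow]
    rw [tsum_ind]; simp
  | k + 1, x => by
    have ih := drift_super hiso hW h0 h1 n hs k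
    rw [Nat.mul_succ, drift_add hiso hW h0 h1]
    have := avg_ge hiso hW h0 h1 (n * k) n x hs
    have := ih x
    push_cast
    linarith

lemma fm_sub (hiso : ∀ g : G, Isometry fun x : X => g • x) (hW : WS o μ)
    (h0 : ∀ g, 0 ≤ μ g) (h1 : ∑' g, μ g = 1) (n : ℕ) : ∀ (k : ℕ),
    firstMoment o (convPow μ (n * k)) ≤ k * firstMoment o (convPow μ n)
  | 0 => by
    rw [fm_eq_drift]
    simp only [drift, Nat.mul_zero, convPow]
    rw [tsum_ind]; simp
  | k + 1 => by
    have ih := fm_sub hiso hW h0 h1 n k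
    rw [Nat.mul_succ, fm_eq_drift, drift_add hiso hW h0 h1]
    rw [fm_eq_drift] at ih
    have hsm := WS_convPow hiso hW (n * k)
    have e1 : ∑' j, convPow μ (n * k) j * firstMoment o (convPow μ n)
        = firstMoment o (convPow μ n) := by
      rw [tsum_mul_right, convPow_sum hiso hW h1, one_mul]
    have : ∑' h, convPow μ (n * k) h * drift o μ n (h⁻¹ • o) ≤ firstMoment o (convPow μ n) := by
      rw [← e1]
      refine (hsm.summable_mul (drift_inv_bd hiso hW h0 n o)).tsum_le_tsum (fun h => ?_)
        (hsm.summable_mul (F := fun _ => firstMoment o (convPow μ n)) (c := |firstMoment o (convPow μ n)|)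
          (fun g => le_mul_of_one_le_right (abs_nonneg _) (wt_one_le o g)))
      exact mul_le_mul_of_nonneg_left (drift_le hiso hW h0 n _) (convPow_nonneg h0 _ h)
    push_cast
    linarith

lemma esc_bdd (h0 : ∀ g, 0 ≤ μ g) :
    BddBelow (Set.range fun n : ℕ => firstMoment o (convPow μ (n + 1)) / (n + 1 : ℝ)) :=
  ⟨0, by rintro _ ⟨n, rfl⟩; exact div_nonneg (fm_nonneg h0 _) (by positivity)⟩

lemma esc_nonneg (h0 : ∀ g, 0 ≤ μ g) : 0 ≤ escapeRate o μ :=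
  le_ciInf fun n => div_nonneg (fm_nonneg h0 _) (by positivity)

lemma esc_le (h0 : ∀ g, 0 ≤ μ g) (n : ℕ) :
    n * escapeRate o μ ≤ firstMoment o (convPow μ n) := by
  cases n with
  | zero => simpa using fm_nonneg h0 0
  | succ n =>
    have := ciInf_le (esc_bdd (o := o) h0) n
    rw [le_div_iff₀ (by positivity)] at this
    push_cast
    unfold escapeRate
    linarith

lemma drift_diff (hiso : ∀ g : G, Isometry fun x : X => g • x) (hW : WS o μ) {μ' : G → ℝ}
    (hW' : WS o μ') (n : ℕ) (x : X) :
    |drift o μ' n x - drift o μ n x| ≤ wn o (convPow μ' n - convPow μ n) := by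
  have a := WS_convPow hiso hW n
  have b := WS_convPow hiso hW' n
  have := (b.sub a).abs_tsum_le (disp_bd o x)
  rw [one_mul] at this
  refine le_trans (le_of_eq ?_) this
  unfold drift
  rw [← (b.summable_mul (disp_bd o x)).tsum_sub (a.summable_mul (disp_bd o x))]
  congr 1
  refine tsum_congr fun g => ?_
  rw [Pi.sub_apply]; ring

/-- The key step. -/
lemma drift_lower (hgeo : IsGeodesicSpace X) (hiso : ∀ g : G, Isometry fun x : X => g • x)
    (hW : WS o μ) (h0 : ∀ g, 0 ≤ μ g) (h1 : ∑' g, μ g = 1) (hne : NonElementary o μ)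
    {ε : ℝ} (hε : 0 < ε) :
    ∃ n : ℕ, 0 < n ∧ ∀ x : X, n * (escapeRate o μ - ε) ≤ drift o μ n x := by
  obtain ⟨g, h, hg, hh, hi⟩ := hne
  obtain ⟨p, hp, hg⟩ := closure_pos hiso hW h0 hg
  obtain ⟨q, hq, hh⟩ := closure_pos hiso hW h0 hh
  set l := escapeRate o μ with hl
  have hl0 : 0 ≤ l := esc_nonneg h0
  obtain ⟨δ, hδ, hδ1, hδl⟩ : ∃ δ : ℝ, 0 < δ ∧ δ ≤ 1 ∧ δ * l ≤ ε / 2 := by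
    refine ⟨min 1 (ε / 2 / (l + 1)), by positivity, min_le_left _ _, ?_⟩
    calc _ ≤ ε / 2 / (l + 1) * l := mul_le_mul_of_nonneg_right (min_le_right _ _) hl0
      _ ≤ ε / 2 / (l + 1) * (l + 1) := by gcongr; linarith
      _ = ε / 2 := by field_simp
  obtain ⟨b, m, C, hb, hm, hS⟩ := schottky o hgeo hiso hi hδ
  set w : ℕ → G := fun i => g ^ i * h ^ b * g ^ (m - i) with hw
  set N := p * m + q * b with hN
  have hNpos : 0 < N := by positivity
  have hwpos : ∀ i ∈ Finset.range m, 0 < convPow μ N (w i) := by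
    intro i hi
    have him := Finset.mem_range.1 hi
    have e : N = p * i + q * b + p * (m - i) := by
      have : p * m = p * i + p * (m - i) := by rw [← Nat.mul_add]; congr 1; omega
      omega
    rw [e]
    exact convPow_mul_pos hiso hW h0 (convPow_mul_pos hiso hW h0
      (convPow_pow_pos hiso hW h0 hg i) (convPow_pow_pos hiso hW h0 hh b))
      (convPow_pow_pos hiso hW h0 hg _)
  obtain ⟨α, hα, hαw⟩ : ∃ α : ℝ, 0 < α ∧ ∀ i ∈ Finset.range m, α ≤ convPow μ N (w i) := by
    obtain ⟨j, hj, hmin⟩ := Finset.exists_min_image (Finset.range m) (fun i => convPow μ N (w i))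
      ⟨0, Finset.mem_range.2 hm⟩
    exact ⟨_, hwpos j hj, hmin⟩
  have hm' : (0 : ℝ) < m := by exact_mod_cast hm
  set c := (1 - δ) * l with hc
  set LN := firstMoment o (convPow μ N) with hLN
  obtain ⟨B, hB0, hB⟩ : ∃ B : ℝ, 0 ≤ B ∧ LN + c * N ≤ α * (B - C) := by
    refine ⟨max 0 (C + (LN + c * N) / α), le_max_left _ _, ?_⟩
    calc LN + c * N = α * ((C + (LN + c * N) / α) - C) := by field_simp; ring
      _ ≤ _ := mul_le_mul_of_nonneg_left (sub_le_sub_right (le_max_right _ _) _) hα.le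
  have main : ∀ (k : ℕ) (x : X), c * (k * N) - B ≤ drift o μ (N * k) x := by
    intro k
    induction k with
    | zero =>
      intro x
      have : drift o μ (N * 0) x = 0 := by
        simp only [drift, Nat.mul_zero, convPow]
        rw [tsum_ind]; simp
      rw [this]; simp; exact hB0
    | succ k ih =>
      intro x
      set s := c * (k * N) - B with hs
      set n := N * k with hn
      have en : N * (k + 1) = N + n := by rw [hn]; ring
      rw [en, drift_add hiso hW h0 h1]
      have a1 := le_drift hiso hW h0 N x
      have hsN := WS_convPow hiso hW N
      have hsn := WS_convPow hiso hW n
      -- the nonnegative part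
      have sm1 := hsN.summable_mul (drift_inv_bd hiso hW h0 n x)
      have sm2 := hsN.summable_mul (F := fun _ => s) (c := |s|)
        (fun g => le_mul_of_one_le_right (abs_nonneg _) (wt_one_le o g))
      have e1 : ∑' k, convPow μ N k * s = s := by
        rw [tsum_mul_right, convPow_sum hiso hW h1 N, one_mul]
      set T := ∑' h, convPow μ N h * (drift o μ n (h⁻¹ • x) - s) with hT
      have e2 : ∑' h, convPow μ N h * drift o μ n (h⁻¹ • x) = s + T := by
        have : T = ∑' h, convPow μ N h * drift o μ n (h⁻¹ • x) - s := by
          rw [hT]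
          conv_rhs => rw [← e1]
          rw [← sm1.tsum_sub sm2]
          exact tsum_congr fun h => by ring
        linarith
      have sm3 : Summable fun h => convPow μ N h * (drift o μ n (h⁻¹ • x) - s) :=
        (sm1.sub sm2).congr fun h => by ring
      have hTi : ∀ i ∈ Finset.range m, α * (drift o μ n ((w i)⁻¹ • x) - s) ≤ T := by
        intro i hi
        refine le_trans (mul_le_mul_of_nonneg_right (hαw i hi) (sub_nonneg.2 (ih _))) ?_
        exact sm3.le_tsum (w i) (fun j _ => mul_nonneg (convPow_nonneg h0 N j)
          (sub_nonneg.2 (ih _)))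
      have hTs : α * (∑ i ∈ Finset.range m, drift o μ n ((w i)⁻¹ • x) - m * s) ≤ m * T := by
        have := Finset.sum_le_sum hTi
        rw [← Finset.mul_sum, Finset.sum_sub_distrib] at this
        simpa using this
      have hsum : m * (c * (k * N) - C) ≤ ∑ i ∈ Finset.range m, drift o μ n ((w i)⁻¹ • x) := by
        have f1 : ∑ i ∈ Finset.range m, drift o μ n ((w i)⁻¹ • x) =
            ∑' a, convPow μ n a * ∑ i ∈ Finset.range m,
              (dist x (w i • a • o) - dist x (w i • o)) := by
          simp only [drift_shift hiso hW, Finset.mul_sum]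
          rw [Summable.tsum_finsetSum]
          intro i _
          refine (hsn.summable_mul (disp_bd o ((w i)⁻¹ • x))).congr fun a => ?_
          have e : ∀ y : X, dist ((w i)⁻¹ • x) y = dist x (w i • y) := fun y => by
            rw [← (hiso (w i)).dist_eq ((w i)⁻¹ • x) y]; simp
          rw [e, e]
        have s5 : Summable fun a => convPow μ n a * ∑ i ∈ Finset.range m,
              (dist x (w i • a • o) - dist x (w i • o)) := by
          simp only [Finset.mul_sum]
          refine summable_sum fun i _ => ?_
          refine (hsn.summable_mul (disp_bd o ((w i)⁻¹ • x))).congr fun a => ?_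
          have e : ∀ y : X, dist ((w i)⁻¹ • x) y = dist x (w i • y) := fun y => by
            rw [← (hiso (w i)).dist_eq ((w i)⁻¹ • x) y]; simp
          rw [e, e]
        have s6 : Summable fun a => convPow μ n a * (m * (1 - δ)) * dist o (a • o) := by
          refine ((hsn.summable_mul (fm_bd o)).mul_left (m * (1 - δ))).congr fun a => by ring
        have s7 : Summable fun a => convPow μ n a * (m * C) :=
          hsn.summable_mul (F := fun _ => m * C) (c := |m * C|)
            (fun g => le_mul_of_one_le_right (abs_nonneg _) (wt_one_le o g))
        have f2 : ∑' a, (convPow μ n a * (m * (1 - δ)) * dist o (a • o) - convPow μ n a * (m * C))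
            ≤ ∑ i ∈ Finset.range m, drift o μ n ((w i)⁻¹ • x) := by
          rw [f1]
          refine (s6.sub s7).tsum_le_tsum (fun a => ?_) s5
          have := mul_le_mul_of_nonneg_left (hS x (a • o)) (convPow_nonneg h0 n a)
          refine le_trans (le_of_eq ?_) this
          ring
        refine le_trans ?_ f2
        rw [s6.tsum_sub s7, tsum_mul_right, convPow_sum hiso hW h1 n]
        have f3 : ∑' a, convPow μ n a * (m * (1 - δ)) * dist o (a • o) =
            m * (1 - δ) * firstMoment o (convPow μ n) := by
          rw [firstMoment, ← tsum_mul_left]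
          exact tsum_congr fun a => by ring
        rw [f3]
        have f4 := esc_le (o := o) h0 n
        have f5 : (n : ℝ) = k * N := by rw [hn]; push_cast; ring
        rw [f5] at f4
        have f6 := mul_le_mul_of_nonneg_left f4 (mul_nonneg hm'.le (sub_nonneg.2 hδ1))
        rw [hc]
        linarith
      have hT2 : α * (B - C) ≤ T := by
        have f7 := mul_le_mul_of_nonneg_left (sub_le_sub_right hsum (m * s)) hα.le
        have f8 : m * (α * (B - C)) ≤ m * T := by
          refine le_trans (le_of_eq ?_) (f7.trans hTs)
          rw [hs]; ring
        exact le_of_mul_le_mul_left f8 hm'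
      rw [e2]
      push_cast
      have : c * ((k + 1) * N) - B = s + c * N := by rw [hs]; ring
      linarith
  obtain ⟨k, hk⟩ := exists_nat_gt (B / (ε / 2))
  have hk' : B < k * (ε / 2) := by rwa [div_lt_iff₀ (by linarith)] at hk
  have hk0 : 0 < k := by
    have : (0 : ℝ) < k := lt_of_le_of_lt (by positivity) hk
    exact_mod_cast this
  refine ⟨N * k, by positivity, fun x => le_trans ?_ (main k x)⟩
  push_cast
  have hN1 : (1 : ℝ) ≤ N := by exact_mod_cast hNpos
  have hk1 : (0 : ℝ) < k := by exact_mod_cast hk0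
  have g1 : k * (ε / 2) ≤ N * k * (ε / 2) := by
    have : (k * (ε / 2)) * 1 ≤ (k * (ε / 2)) * N := mul_le_mul_of_nonneg_left hN1 (by positivity)
    linarith
  have g2 : N * k * (δ * l) ≤ N * k * (ε / 2) := by gcongr
  rw [hc]
  nlinarith

end Drift

section Final

variable {G X : Type*} [Group G] [MetricSpace X] [MulAction G X]

lemma scheffe {G : Type*} {a : G → ℝ} {as : ℕ → G → ℝ} (ha : ∀ g, 0 ≤ a g)
    (has : ∀ i g, 0 ≤ as i g) (hs : Summable a) (hss : ∀ᶠ i in atTop, Summable (as i))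
    (hp : ∀ g, Tendsto (fun i => as i g) atTop (𝓝 (a g)))
    (ht : Tendsto (fun i => ∑' g, as i g) atTop (𝓝 (∑' g, a g))) :
    Tendsto (fun i => ∑' g, |as i g - a g|) atTop (𝓝 0) := by
  have h1 : Tendsto (fun i => ∑' g, max (a g - as i g) 0) atTop (𝓝 (∑' g : G, (0 : ℝ))) := by
    refine tendsto_tsum_of_dominated_convergence hs (fun g => ?_) (Eventually.of_forall fun i g => ?_)
    · have : Tendsto (fun i => max (a g - as i g) 0) atTop (𝓝 (max (a g - a g) 0)) :=
        (tendsto_const_nhds.sub (hp g)).max tendsto_const_nhds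
      simpa using this
    · rw [Real.norm_eq_abs, abs_of_nonneg (le_max_right _ _)]
      exact max_le (by linarith [has i g]) (ha g)
  have h2 := (ht.sub_const (∑' g, a g)).add (h1.const_mul 2)
  simp only [tsum_zero, mul_zero, sub_self, add_zero] at h2
  refine h2.congr' ?_
  filter_upwards [hss] with i hi
  have h3 : Summable fun g => max (a g - as i g) 0 :=
    Summable.of_nonneg_of_le (fun g => le_max_right _ _)
      (fun g => max_le (by linarith [has i g]) (ha g)) hs
  rw [← hi.tsum_sub hs, ← tsum_mul_left, ← (hi.sub hs).tsum_add (h3.mul_left 2)]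
  refine tsum_congr fun g => ?_
  rcases le_total (a g) (as i g) with h | h
  · rw [max_eq_right (by linarith), abs_of_nonneg (by linarith)]; ring
  · rw [max_eq_left (by linarith), abs_of_nonpos (by linarith)]; ring

lemma convPow_tendsto {o : X} (hiso : ∀ g : G, Isometry fun x : X => g • x) {μ : G → ℝ}
    {μs : ℕ → G → ℝ} (hW : WS o μ) (hWs : ∀ᶠ i in atTop, WS o (μs i))
    (h1 : Tendsto (fun i => wn o (μs i - μ)) atTop (𝓝 0)) :
    ∀ n, Tendsto (fun i => wn o (convPow (μs i) n - convPow μ n)) atTop (𝓝 0)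
  | 0 => by simp [convPow, wn]
  | n + 1 => by
    have ih := convPow_tendsto hiso hW hWs h1 n
    have h2 : Tendsto (fun i => wn o (μs i - μ) *
        (wn o (convPow (μs i) n - convPow μ n) + wn o (convPow μ n)) +
        wn o μ * wn o (convPow (μs i) n - convPow μ n)) atTop
        (𝓝 (0 * (0 + wn o (convPow μ n)) + wn o μ * 0)) :=
      (h1.mul (ih.add_const _)).add (ih.const_mul _)
    simp only [zero_mul, mul_zero, add_zero] at h2
    refine squeeze_zero' (Eventually.of_forall fun i => wn_nonneg _ _) ?_ h2
    filter_upwards [hWs] with i hi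
    exact conv_diff hiso hW (WS_convPow hiso hW n) hi (WS_convPow hiso hi n)

end Final

/-- Continuity of the escape rate (Theorem 1.1 / Gouëzel): if `μ_i → μ` simply and
`L(μ_i) → L(μ)`, then `l(μ_i) → l(μ)`. -/
theorem escape_rate_continuity
    {G X : Type*} [Group G] [Countable G] [MetricSpace X] [MulAction G X]
    (o : X) (hgeo : IsGeodesicSpace X)
    (hiso : ∀ g : G, Isometry fun x : X => g • x)
    (hind : HasIndepContracting G o)
    (μ : G → ℝ) (hμ : IsProbMeasure μ) (hne : NonElementary o μ)
    (hL : HasFiniteFirstMoment o μ)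
    (μs : ℕ → G → ℝ) (hμs : ∀ i, IsProbMeasure (μs i))
    (hsimple : ∀ g : G, Filter.Tendsto (fun i => μs i g) Filter.atTop (𝓝 (μ g)))
    (hLfin : ∀ᶠ i in Filter.atTop, HasFiniteFirstMoment o (μs i))
    (hLconv : Filter.Tendsto (fun i => firstMoment o (μs i)) Filter.atTop
      (𝓝 (firstMoment o μ))) :
    Filter.Tendsto (fun i => escapeRate o (μs i)) Filter.atTop (𝓝 (escapeRate o μ)) := by

  have hW := WS_of o hμ hL
  have hWs : ∀ᶠ i in atTop, WS o (μs i) := by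
    filter_upwards [hLfin] with i hi using WS_of o (hμs i) hi
  have hbase : Tendsto (fun i => wn o (μs i - μ)) atTop (𝓝 0) := by
    have hnn : ∀ ν : G → ℝ, IsProbMeasure ν → (fun g => |ν g| * wt o g) = fun g => ν g * wt o g :=
      fun ν hν => by ext g; rw [abs_of_nonneg (hν.1 g)]
    have htot : ∀ ν : G → ℝ, IsProbMeasure ν → HasFiniteFirstMoment o ν →
        ∑' g, ν g * wt o g = 1 + firstMoment o ν := by
      intro ν hν hLν
      rw [← hν.2.2, firstMoment, ← hν.2.1.tsum_add hLν]
      exact tsum_congr fun g => by rw [wt]; ring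
    have := scheffe (a := fun g => μ g * wt o g) (as := fun i g => μs i g * wt o g)
      (fun g => mul_nonneg (hμ.1 g) (wt_pos o g).le)
      (fun i g => mul_nonneg ((hμs i).1 g) (wt_pos o g).le)
      (by have := hW; unfold WS at this; rwa [hnn μ hμ] at this)
      (by
        filter_upwards [hWs] with i hi
        unfold WS at hi; rwa [hnn _ (hμs i)] at hi)
      (fun g => (hsimple g).mul_const _)
      (by
        rw [htot μ hμ hL]
        refine (hLconv.const_add 1).congr' ?_
        filter_upwards [hLfin] with i hi
        rw [htot _ (hμs i) hi])
    refine this.congr fun i => ?_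
    unfold wn
    refine tsum_congr fun g => ?_
    rw [← sub_mul, abs_mul, abs_of_pos (wt_pos o g), Pi.sub_apply]
  have hconv := convPow_tendsto hiso hW hWs hbase
  rw [tendsto_order]
  constructor
  · intro a ha
    set ε := (escapeRate o μ - a) / 3 with hε
    have hεpos : 0 < ε := by rw [hε]; linarith
    obtain ⟨n, hn, hlow⟩ := drift_lower hgeo hiso hW hμ.1 hμ.2.2 hne hεpos
    filter_upwards [hWs, (hconv n).eventually (gt_mem_nhds hεpos)] with i hi hclose
    have hn1 : (1 : ℝ) ≤ n := by exact_mod_cast hn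
    have hd : ∀ x, n * (escapeRate o μ - 2 * ε) ≤ drift o (μs i) n x := by
      intro x
      have h1 := drift_diff hiso hW hi n x
      have h2 := (abs_le.1 (h1.trans hclose.le)).1
      have h3 := hlow x
      nlinarith
    have h4 := drift_super hiso hi (hμs i).1 (hμs i).2.2 n hd
    refine lt_of_lt_of_le (b := escapeRate o μ - 2 * ε) (by rw [hε]; linarith) ?_
    refine le_ciInf fun m => ?_
    have h5 := h4 (m + 1) o
    have h6 := fm_sub hiso hi (hμs i).1 (hμs i).2.2 (m + 1) n
    rw [mul_comm (m + 1) n, fm_eq_drift] at h6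
    rw [le_div_iff₀ (by positivity)]
    have h7 := h5.trans h6
    push_cast at h7
    have h8 : (n : ℝ) * ((escapeRate o μ - 2 * ε) * (m + 1)) ≤
        n * firstMoment o (convPow (μs i) (m + 1)) := by linarith
    exact le_of_mul_le_mul_left h8 (by linarith)
  · intro a ha
    obtain ⟨n, hn⟩ := exists_lt_of_ciInf_lt (show (⨅ n : ℕ,
      firstMoment o (convPow μ (n + 1)) / (n + 1 : ℝ)) < a from ha)
    have hpos : (0 : ℝ) < n + 1 := by positivity
    rw [div_lt_iff₀ hpos] at hn
    filter_upwards [hWs, (hconv (n + 1)).eventually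
      (gt_mem_nhds (sub_pos.2 hn))] with i hi hclose
    have h1 := (abs_le.1 (drift_diff hiso hW hi (n + 1) o)).2
    rw [← fm_eq_drift, ← fm_eq_drift] at h1
    refine lt_of_le_of_lt (ciInf_le (esc_bdd (hμs i).1) n) ?_
    rw [div_lt_iff₀ hpos]
    linarith
end

section
/- Let X be a geodesic metric space with basepoint o, let G be a countable group acting on X by isometries containing two independent contracting isometries, and let μ be a non-elementary probability measure on G with L(μ) < ∞. Then there exist constants C > 0 and ε > 0 such that for every probability measure μ' on G with ‖μ' − μ‖_{0,1} < ε one has |l(μ') − l(μ)| ≤ C·‖μ' − μ‖_{0,1}. -/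
open Filter Topology Pointwise

/-- The norm `‖η‖₀ + ‖η‖₁ = ∑_g (1 + d(o, g o))|η(g)|`, valued in `ℝ≥0∞` so that
finiteness is recorded. -/
noncomputable def enorm01 {G X : Type*} [Group G] [MetricSpace X] [MulAction G X]
    (o : X) (η : G → ℝ) : ENNReal :=
  ∑' g : G, ENNReal.ofReal ((1 + dist o (g • o)) * |η g|)

section Geometry

variable {X : Type*} [MetricSpace X]

/-- Abstract contracting property of a set. -/
def Contr (K : ℝ) (A : Set X) : Prop :=
  (∀ x, (projSet A x).Nonempty) ∧
  ∀ (f : ℝ → X) (x y : X), IsGeodesicSegment f x y →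
    (∀ t ∈ Set.Icc (0 : ℝ) (dist x y), K ≤ Metric.infDist (f t) A) →
    ∀ p ∈ projSet A x, ∀ q ∈ projSet A y, dist p q < K

theorem Contr.mono {K K' : ℝ} {A : Set X} (h : Contr K A) (hK : K ≤ K') : Contr K' A :=
  ⟨h.1, fun f x y hf ht p hp q hq =>
    lt_of_lt_of_le (h.2 f x y hf (fun t h' => hK.trans (ht t h')) p hp q hq) hK⟩

theorem contr_of_axis {K : ℝ} (hK : 1 < K) {γ : ℤ → X} (h : IsContractingAxisZ K γ) :
    Contr K (Set.range γ) := by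
  obtain ⟨hq, hc⟩ := h
  refine ⟨fun x => ?_, ?_⟩
  · set R : ℝ := K * (2 * dist x (γ 0) + K) with hR
    have hfin : (Set.Icc (-⌈R⌉) ⌈R⌉).Finite := Set.finite_Icc _ _
    have h0R : 0 ≤ R := by positivity
    have h0 : (0:ℤ) ∈ Set.Icc (-⌈R⌉) ⌈R⌉ := by
      have : 0 ≤ ⌈R⌉ := Int.ceil_nonneg h0R
      constructor <;> omega
    obtain ⟨i, hi, hmin⟩ := Set.exists_min_image _ (fun i => dist x (γ i)) hfin ⟨0, h0⟩
    have hall : ∀ j, dist x (γ i) ≤ dist x (γ j) := by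
      intro j
      by_cases hj : j ∈ Set.Icc (-⌈R⌉) ⌈R⌉
      · exact hmin j hj
      · have h1 := hmin 0 h0
        have h2 := (hq j 0).1
        have h3 : R < |(j:ℝ)| := by
          by_contra hcon
          push Not at hcon
          apply hj
          have hle := Int.le_ceil R
          rw [abs_le] at hcon
          constructor
          · have : (-(⌈R⌉:ℝ)) ≤ j := by linarith
            exact_mod_cast this
          · have : (j:ℝ) ≤ ⌈R⌉ := by linarith
            exact_mod_cast this
        have h4 : 2 * dist x (γ 0) + K ≤ |(j:ℝ)| / K := by
          rw [le_div_iff₀ (by linarith)]; nlinarith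
        have h5 : dist (γ j) (γ 0) ≤ dist x (γ j) + dist x (γ 0) := by
          rw [dist_comm x (γ j)]; exact dist_triangle _ _ _
        simp only [Int.cast_zero, sub_zero] at h2
        linarith
    refine ⟨γ i, ⟨i, rfl⟩, le_antisymm ?_ (Metric.infDist_le_dist_of_mem ⟨i, rfl⟩)⟩
    refine (Metric.le_infDist (Set.range_nonempty γ)).2 ?_
    rintro _ ⟨j, rfl⟩
    exact hall j
  · intro f x y hf ht p hp q hq'
    have h1 := hc f x y hf ht
    have hpm : p ∈ projSetOf (Set.range γ) (f '' Set.Icc (0 : ℝ) (dist x y)) :=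
      Set.mem_biUnion ⟨0, ⟨le_rfl, dist_nonneg⟩, hf.1⟩ hp
    have hqm : q ∈ projSetOf (Set.range γ) (f '' Set.Icc (0 : ℝ) (dist x y)) :=
      Set.mem_biUnion ⟨dist x y, ⟨dist_nonneg, le_rfl⟩, hf.2.1⟩ hq'
    have h2 := lt_of_le_of_lt (EMetric.edist_le_diam_of_mem hpm hqm) h1
    rw [edist_dist] at h2
    exact (ENNReal.ofReal_lt_ofReal_iff (by linarith)).1 h2

theorem geod_rev {f : ℝ → X} {x y : X} (hf : IsGeodesicSegment f x y) :
    IsGeodesicSegment (fun u => f (dist x y - u)) y x := by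
  refine ⟨by simpa using hf.2.1, by simpa [dist_comm y x] using hf.1, ?_⟩
  intro s hs t ht
  rw [dist_comm y x] at hs ht
  rw [hf.2.2 _ ⟨by linarith [hs.2], by linarith [hs.1]⟩ _ ⟨by linarith [ht.2], by linarith [ht.1]⟩,
    abs_sub_comm]
  congr 1; ring

theorem geod_init {f : ℝ → X} {x y : X} (hf : IsGeodesicSegment f x y) {t : ℝ}
    (ht : t ∈ Set.Icc (0:ℝ) (dist x y)) : dist x (f t) = t ∧ IsGeodesicSegment f x (f t) := by
  have h1 : dist x (f t) = t := by
    rw [← hf.1, hf.2.2 0 ⟨le_rfl, dist_nonneg⟩ t ht]; simp [abs_of_nonneg ht.1]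
  refine ⟨h1, hf.1, by rw [h1], ?_⟩
  rw [h1]
  intro s hs u hu
  exact hf.2.2 s ⟨hs.1, hs.2.trans ht.2⟩ u ⟨hu.1, hu.2.trans ht.2⟩

theorem half_entry {K : ℝ} (hK : 0 < K) {A : Set X} (hA : Contr K A) {f : ℝ → X} {x y p : X}
    (hf : IsGeodesicSegment f x y) (hp : p ∈ projSet A x) {t0 : ℝ}
    (ht0 : t0 ∈ Set.Icc (0:ℝ) (dist x y)) (hin : Metric.infDist (f t0) A ≤ K) :
    ∃ t1, 0 ≤ t1 ∧ t1 ≤ t0 ∧ dist (f t1) p ≤ 2 * K := by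
  have hlip : ∀ s ∈ Set.Icc (0:ℝ) (dist x y), ∀ t ∈ Set.Icc (0:ℝ) (dist x y),
      Metric.infDist (f s) A ≤ Metric.infDist (f t) A + |s - t| := by
    intro s hs t ht
    rw [← hf.2.2 s hs t ht]
    exact Metric.infDist_le_infDist_add_dist
  set T : Set ℝ := {t | t ∈ Set.Icc (0:ℝ) (dist x y) ∧ Metric.infDist (f t) A ≤ K} with hT
  have hne : T.Nonempty := ⟨t0, ht0, hin⟩
  have hbdd : BddBelow T := ⟨0, fun t ht => ht.1.1⟩
  set t1 := sInf T with ht1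
  have h01 : 0 ≤ t1 := le_csInf hne fun t ht => ht.1.1
  have h10 : t1 ≤ t0 := csInf_le hbdd ⟨ht0, hin⟩
  have hmem : t1 ∈ Set.Icc (0:ℝ) (dist x y) := ⟨h01, h10.trans ht0.2⟩
  have hle : Metric.infDist (f t1) A ≤ K := by
    refine le_of_forall_pos_le_add fun ε hε => ?_
    obtain ⟨t, htT, htlt⟩ := exists_lt_of_csInf_lt hne (show sInf T < t1 + ε by linarith)
    have h1 := csInf_le hbdd htT
    have h2 := hlip t1 hmem t htT.1
    rw [abs_of_nonpos (by linarith)] at h2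
    linarith [htT.2]
  refine ⟨t1, h01, h10, ?_⟩
  rcases h01.eq_or_lt with h | h
  · rw [← h, hf.1] at hle ⊢
    rw [hp.2]; linarith
  · have hlt : ∀ t, 0 ≤ t → t < t1 → K ≤ Metric.infDist (f t) A := by
      intro t h0 h1
      by_contra hcon
      push Not at hcon
      exact absurd (csInf_le hbdd (show t ∈ T from ⟨⟨h0, by linarith [hmem.2]⟩, hcon.le⟩))
        (by rw [← ht1]; linarith)
    have hge : K ≤ Metric.infDist (f t1) A := by
      refine le_of_forall_pos_le_add fun ε hε => ?_
      have hm : max 0 (t1 - ε) < t1 := max_lt h (by linarith)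
      have h1 := hlt (max 0 (t1 - ε)) (le_max_left _ _) hm
      have h2 := hlip (max 0 (t1 - ε)) ⟨le_max_left _ _, hm.le.trans hmem.2⟩ t1 hmem
      rw [abs_of_neg (by linarith)] at h2
      linarith [le_max_right 0 (t1 - ε)]
    obtain ⟨r, hr⟩ := hA.1 (f t1)
    obtain ⟨hd, hg⟩ := geod_init hf hmem
    have := hA.2 f x (f t1) hg (by
      rw [hd]; intro t ht
      rcases ht.2.eq_or_lt with h' | h'
      · rw [h']; exact hge
      · exact hlt t ht.1 h') p hp r hr
    have h3 := dist_triangle (f t1) r p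
    rw [hr.2, dist_comm r p] at h3
    linarith

theorem entry {K : ℝ} (hK : 0 < K) {A : Set X} (hA : Contr K A) {f : ℝ → X} {x y p q : X}
    (hf : IsGeodesicSegment f x y) (hp : p ∈ projSet A x) (hq : q ∈ projSet A y)
    (hpq : K ≤ dist p q) :
    ∃ t1 t2, 0 ≤ t1 ∧ t1 ≤ t2 ∧ t2 ≤ dist x y ∧ dist (f t1) p ≤ 2 * K ∧ dist (f t2) q ≤ 2 * K := by
  have : ∃ t0 ∈ Set.Icc (0:ℝ) (dist x y), Metric.infDist (f t0) A ≤ K := by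
    by_contra hcon
    push Not at hcon
    exact absurd (hA.2 f x y hf (fun t ht => (hcon t ht).le) p hp q hq) (not_lt.2 hpq)
  obtain ⟨t0, ht0, hin⟩ := this
  obtain ⟨t1, h1, h2, h3⟩ := half_entry hK hA hf hp ht0 hin
  obtain ⟨t2, h4, h5, h6⟩ := half_entry hK hA (geod_rev hf) hq (t0 := dist x y - t0)
    (by rw [dist_comm y x]; exact ⟨by linarith [ht0.2], by linarith [ht0.1]⟩)
    (by simpa using hin)
  exact ⟨t1, dist x y - t2, h1, by linarith, by linarith, h3, h6⟩

theorem far_proj (hgeo : IsGeodesicSpace X) {K : ℝ} (hK : 0 < K) {A : Set X} (hA : Contr K A)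
    {x y p q : X} (hp : p ∈ projSet A x) (hq : q ∈ projSet A y) (hpq : K ≤ dist p q) :
    dist x p + dist y q ≤ dist x y + 4 * K ∧ dist p q ≤ dist x y + 4 * K := by
  obtain ⟨f, hf⟩ := hgeo x y
  obtain ⟨t1, t2, h1, h2, h3, h4, h5⟩ := entry hK hA hf hp hq hpq
  have m1 : t1 ∈ Set.Icc (0:ℝ) (dist x y) := ⟨h1, h2.trans h3⟩
  have m2 : t2 ∈ Set.Icc (0:ℝ) (dist x y) := ⟨h1.trans h2, h3⟩
  have d1 := (geod_init hf m1).1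
  have d2 : dist (f t2) y = dist x y - t2 := by
    have := hf.2.2 t2 m2 (dist x y) ⟨dist_nonneg, le_rfl⟩
    rw [hf.2.1, abs_of_nonpos (by linarith)] at this
    linarith
  have d3 : dist (f t1) (f t2) = t2 - t1 := by
    rw [hf.2.2 t1 m1 t2 m2, abs_of_nonpos (by linarith)]; ring
  have e1 := dist_triangle x (f t1) p
  have e2 := dist_triangle y (f t2) q
  have e3 := dist_triangle4 p (f t1) (f t2) q
  rw [dist_comm y (f t2)] at e2
  rw [dist_comm p (f t1)] at e3
  constructor <;> linarith

theorem coarse_lip (hgeo : IsGeodesicSpace X) {K : ℝ} (hK : 0 < K) {A : Set X} (hA : Contr K A)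
    {x y p q : X} (hp : p ∈ projSet A x) (hq : q ∈ projSet A y) :
    dist p q ≤ dist x y + 4 * K := by
  by_cases h : K ≤ dist p q
  · exact (far_proj hgeo hK hA hp hq h).2
  · push Not at h
    linarith [@dist_nonneg _ _ x y]

theorem behrstock (hgeo : IsGeodesicSpace X) {K : ℝ} (hK : 0 < K) {A B : Set X}
    (hA : Contr K A) (hB : Contr K B) {x p q r s : X} (hp : p ∈ projSet B x)
    (hq : q ∈ projSet A x) (hr : r ∈ projSet A p) (hqr : K ≤ dist q r) (hs : s ∈ projSet B q) :
    dist p s ≤ 6 * K := by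
  obtain ⟨f, hf⟩ := hgeo x p
  obtain ⟨t1, t2, h1, h2, h3, h4, h5⟩ := entry hK hA hf hq hr hqr
  have m1 : t1 ∈ Set.Icc (0:ℝ) (dist x p) := ⟨h1, h2.trans h3⟩
  have d1 := (geod_init hf m1).1
  have d2 : dist (f t1) p = dist x p - t1 := by
    have := hf.2.2 t1 m1 (dist x p) ⟨dist_nonneg, le_rfl⟩
    rw [hf.2.1, abs_of_nonpos (by linarith)] at this
    linarith
  have hp' : p ∈ projSet B (f t1) := by
    refine ⟨hp.1, le_antisymm ?_ (Metric.infDist_le_dist_of_mem hp.1)⟩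
    have := @Metric.infDist_le_infDist_add_dist _ _ B x (f t1)
    rw [← hp.2] at this
    linarith
  linarith [coarse_lip hgeo hK hB hp' hs]

variable {G : Type*} [Group G] [MulAction G X] [IsIsometricSMul G X]

theorem projSet_smul {A : Set X} {x p : X} (g : G) (hp : p ∈ projSet A x) :
    g • p ∈ projSet (g • A) (g • x) := by
  refine ⟨Set.smul_mem_smul_set hp.1, ?_⟩
  rw [dist_smul, hp.2]
  exact (Metric.infDist_image (isometry_smul X g)).symm

theorem projSet_smul' {A : Set X} {x p : X} (g : G) (hp : p ∈ projSet (g • A) x) :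
    g⁻¹ • p ∈ projSet A (g⁻¹ • x) := by
  have := projSet_smul g⁻¹ hp
  rwa [inv_smul_smul] at this

theorem Contr.smul {K : ℝ} {A : Set X} (hA : Contr K A) (g : G) : Contr K (g • A) := by
  refine ⟨fun x => ?_, ?_⟩
  · obtain ⟨p, hp⟩ := hA.1 (g⁻¹ • x)
    have := projSet_smul g hp
    rw [smul_inv_smul] at this
    exact ⟨_, this⟩
  · intro f x y hf ht p hp q hq
    have := hA.2 (fun t => g⁻¹ • f t) (g⁻¹ • x) (g⁻¹ • y) ?_ ?_ _ (projSet_smul' g hp) _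
      (projSet_smul' g hq)
    · rwa [dist_smul] at this
    · refine ⟨by simp [hf.1], by simp [hf.2.1], ?_⟩
      intro s hs t ht
      rw [dist_smul] at hs ht ⊢
      exact hf.2.2 s hs t ht
    · intro t h
      rw [dist_smul] at h
      have h1 : Metric.infDist (g • (g⁻¹ • f t)) (g • A) = Metric.infDist (g⁻¹ • f t) A :=
        Metric.infDist_image (isometry_smul X g)
      rw [smul_inv_smul] at h1
      rw [← h1]
      exact ht t h

theorem zorbit_smul (o : X) (h : G) (k : ℤ) : h ^ k • zorbit o h = zorbit o h := by
  ext z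
  constructor
  · rintro ⟨_, ⟨i, rfl⟩, rfl⟩
    exact ⟨k + i, by simp [zpow_add, mul_smul]⟩
  · rintro ⟨i, rfl⟩
    refine ⟨h ^ (i - k) • o, ⟨i - k, rfl⟩, ?_⟩
    simp [← mul_smul, ← zpow_add]

theorem exists_far {o : X} {g : G} {K : ℝ} (hK : 1 < K)
    (h : IsQuasigeodesicZ K fun i : ℤ => g ^ i • o) (R : ℝ) :
    ∃ n : ℕ, 1 ≤ n ∧ ∀ k : ℤ, (n : ℤ) ≤ |k| → R ≤ dist o (g ^ k • o) := by
  obtain ⟨n, hn⟩ := exists_nat_ge (K * (R + K))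
  refine ⟨n + 1, by omega, fun k hk => ?_⟩
  have h1 := (h k 0).1
  simp only [Int.cast_zero, sub_zero, zpow_zero, one_smul] at h1
  rw [dist_comm]
  have h2 : ((n:ℝ) + 1) ≤ |(k:ℝ)| := by exact_mod_cast hk
  have h3 : R + K ≤ |(k:ℝ)| / K := by
    rw [le_div_iff₀ (by linarith)]; nlinarith
  linarith

theorem schottky_s1 (hgeo : IsGeodesicSpace X) (o : X) (g h : G) (hgh : IndependentPair o g h) :
    ∃ n n' : ℕ, 1 ≤ n ∧ ∃ C : ℝ, ∃ (A : X → Fin 16 → Prop) (B : Fin 16 → X → Prop),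
      (∀ x i j, ¬ A x i → ¬ A x j → i = j) ∧ (∀ y i j, ¬ B i y → ¬ B j y → i = j) ∧
      ∀ x i y, A x i → B i y →
        dist x o + dist o (((g ^ n) ^ (i : ℕ) * h ^ n' * (g ^ n) ^ (16 - (i : ℕ))) • y) ≤
          dist x (((g ^ n) ^ (i : ℕ) * h ^ n' * (g ^ n) ^ (16 - (i : ℕ))) • y) + C := by
  obtain ⟨⟨K1, hK1, hg⟩, ⟨K2, hK2, hh⟩, hb1, hb2⟩ := hgh
  set P := zorbit o g with hP
  set H := zorbit o h with hH
  set K := max K1 K2 with hKdef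
  have hK : 0 < K := lt_of_lt_of_le (by linarith) (le_max_left K1 K2)
  have cP : Contr K P := (contr_of_axis hK1 hg).mono (le_max_left _ _)
  have cH : Contr K H := (contr_of_axis hK2 hh).mono (le_max_right _ _)
  have oP : o ∈ P := ⟨0, by simp⟩
  have oH : o ∈ H := ⟨0, by simp⟩
  obtain ⟨r1, hr1⟩ := hb1.subset_closedBall o
  obtain ⟨r2, hr2⟩ := hb2.subset_closedBall o
  set D1 := max r1 r2
  have bP : ∀ z ∈ H, ∀ p ∈ projSet P z, dist p o ≤ D1 := fun z hz p hp =>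
    (hr1 (Set.mem_biUnion hz hp)).trans (le_max_left _ _)
  have bH : ∀ z ∈ P, ∀ p ∈ projSet H z, dist p o ≤ D1 := fun z hz p hp =>
    (hr2 (Set.mem_biUnion hz hp)).trans (le_max_right _ _)
  obtain ⟨n, hn1, hn⟩ := exists_far hK1 hg.1 (2 * D1 + K)
  set a : G := g ^ n with ha
  have hfar : ∀ j : ℤ, j ≠ 0 → 2 * D1 + K ≤ dist o (a ^ j • o) := by
    intro j hj
    have : a ^ j = g ^ ((n : ℤ) * j) := by rw [ha, zpow_mul, zpow_natCast]
    rw [this]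
    apply hn
    rw [abs_mul]
    have : 1 ≤ |j| := Int.one_le_abs hj
    have h2 : |(n:ℤ)| = n := abs_of_nonneg (by omega)
    rw [h2]; nlinarith
  have haP : ∀ j : ℤ, a ^ j • P = P := by
    intro j
    have : a ^ j = g ^ ((n : ℤ) * j) := by rw [ha, zpow_mul, zpow_natCast]
    rw [this]; exact zorbit_smul o g _
  set D0 := D1 + 6 * K with hD0
  have key : ∀ j : ℤ, j ≠ 0 → ∀ z ∈ H, ∀ p ∈ projSet H (a ^ j • z), dist p o ≤ D0 := by
    intro j hj z hz p hp
    obtain ⟨q0, hq0⟩ := cP.1 z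
    have hq : a ^ j • q0 ∈ projSet P (a ^ j • z) := by
      have := projSet_smul (a ^ j) hq0
      rwa [haP] at this
    obtain ⟨r, hr⟩ := cP.1 p
    obtain ⟨s, hs⟩ := cH.1 (a ^ j • q0)
    have h1 := bP _ hz _ hq0
    have h2 := bP _ hp.1 _ hr
    have h3 := bH _ hq.1 _ hs
    have h4 := hfar j hj
    have h5 : dist (a ^ j • q0) (a ^ j • o) ≤ D1 := by rwa [dist_smul]
    have h6 := dist_triangle4 o r (a ^ j • q0) (a ^ j • o)
    rw [dist_comm o r, dist_comm r (a ^ j • q0)] at h6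
    have h7 := behrstock hgeo hK cP cH hp hq hr (by linarith) hs
    linarith [dist_triangle p s o]
  set D := D0 + 6 * K with hD
  have onebad : ∀ u : X, ∀ j : ℤ, j ≠ 0 → ∀ p ∈ projSet H u, ∀ q ∈ projSet H (a ^ j • u),
      dist p o ≤ D ∨ dist q o ≤ D := by
    intro u j hj p hp q hq
    by_contra hcon
    push Not at hcon
    obtain ⟨hc1, hc2⟩ := hcon
    have cA : Contr K ((a ^ j)⁻¹ • H) := cH.smul _
    have hq' : (a ^ j)⁻¹ • q ∈ projSet ((a ^ j)⁻¹ • H) u := by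
      have := projSet_smul (a ^ j)⁻¹ hq
      rwa [inv_smul_smul] at this
    obtain ⟨r, hr⟩ := cA.1 p
    have hr' := projSet_smul' _ hr
    rw [inv_inv] at hr'
    have h1 := key j hj p hp.1 _ hr'
    obtain ⟨s, hs⟩ := cH.1 ((a ^ j)⁻¹ • q)
    have hs' := hs
    rw [← zpow_neg] at hs'
    have h2 := key (-j) (by omega) q hq.1 s hs'
    have h3 : K ≤ dist ((a ^ j)⁻¹ • q) r := by
      rw [← dist_smul (a ^ j), smul_inv_smul]
      linarith [dist_triangle q (a ^ j • r) o]
    have h4 := behrstock hgeo hK cA cH hp hq' hr h3 hs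
    linarith [dist_triangle p s o]
  obtain ⟨n', hn'1, hn'⟩ := exists_far hK2 hh.1 (2 * D + K)
  have hn'2 : 2 * D + K ≤ dist o (h ^ n' • o) := by
    have := hn' n' (by simp)
    rwa [zpow_natCast] at this
  have hhH : h ^ n' • H = H := by
    have := zorbit_smul o h n'
    rwa [zpow_natCast] at this
  refine ⟨n, n', hn1, 4 * K + 2 * D + dist o (h ^ n' • o) +
    2 * ∑ i : Fin 16, dist o ((a ^ (i:ℕ))⁻¹ • o),
    fun x i => ∃ p ∈ projSet H ((a ^ (i:ℕ))⁻¹ • x), dist p o ≤ D,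
    fun i y => ∃ q ∈ projSet H (a ^ (16 - (i:ℕ)) • y), dist q o ≤ D, ?_, ?_, ?_⟩
  · intro x i j hi hj
    by_contra hij
    obtain ⟨p, hp⟩ := cH.1 ((a ^ (i:ℕ))⁻¹ • x)
    obtain ⟨q, hq⟩ := cH.1 ((a ^ (j:ℕ))⁻¹ • x)
    have hne : ((i:ℕ):ℤ) - ((j:ℕ):ℤ) ≠ 0 := by
      intro h0; apply hij; ext; omega
    have e : (a ^ (j:ℕ))⁻¹ • x = a ^ (((i:ℕ):ℤ) - ((j:ℕ):ℤ)) • ((a ^ (i:ℕ))⁻¹ • x) := by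
      rw [← mul_smul, ← zpow_natCast, ← zpow_natCast, ← zpow_neg, ← zpow_neg, ← zpow_add]
      congr 2; ring
    have hq' := hq
    rw [e] at hq'
    rcases onebad _ _ hne p hp q hq' with h1 | h1
    · exact hi ⟨p, hp, h1⟩
    · exact hj ⟨q, hq, h1⟩
  · intro y i j hi hj
    by_contra hij
    obtain ⟨p, hp⟩ := cH.1 (a ^ (16 - (i:ℕ)) • y)
    obtain ⟨q, hq⟩ := cH.1 (a ^ (16 - (j:ℕ)) • y)
    have hne : ((i:ℕ):ℤ) - ((j:ℕ):ℤ) ≠ 0 := by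
      intro h0; apply hij; ext; omega
    have e : a ^ (16 - (j:ℕ)) • y = a ^ (((i:ℕ):ℤ) - ((j:ℕ):ℤ)) • (a ^ (16 - (i:ℕ)) • y) := by
      rw [← mul_smul, ← zpow_natCast, ← zpow_natCast, ← zpow_add]
      congr 2
      have := i.2; have := j.2
      omega
    have hq' := hq
    rw [e] at hq'
    rcases onebad _ _ hne p hp q hq' with h1 | h1
    · exact hi ⟨p, hp, h1⟩
    · exact hj ⟨q, hq, h1⟩
  · rintro x i y ⟨p, hp, hpd⟩ ⟨q, hq, hqd⟩
    set b := a ^ (i:ℕ) with hb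
    set v := h ^ n' • (a ^ (16 - (i:ℕ)) • y) with hv
    have hs : (b * h ^ n' * a ^ (16 - (i:ℕ))) • y = b • v := by
      rw [hv, mul_smul, mul_smul]
    rw [hs]
    have hq2 : h ^ n' • q ∈ projSet H v := by
      have := projSet_smul (h ^ n') hq
      rwa [hhH] at this
    have h1 : dist (h ^ n' • q) (h ^ n' • o) ≤ D := by rwa [dist_smul]
    have h2 := dist_triangle4 o p (h ^ n' • q) (h ^ n' • o)
    rw [dist_comm o p] at h2
    have h3 := (far_proj hgeo hK cH hp hq2 (by linarith)).1
    have h4 : dist (b⁻¹ • x) v = dist x (b • v) := by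
      rw [← dist_smul b, smul_inv_smul]
    have h5 : dist x o = dist (b⁻¹ • x) (b⁻¹ • o) := (dist_smul _ _ _).symm
    have h6 : dist o (b • v) = dist v (b⁻¹ • o) := by
      rw [dist_comm, ← dist_smul b v, smul_inv_smul]
    have h7 := dist_triangle4 (b⁻¹ • x) p o (b⁻¹ • o)
    have h8 := dist_triangle4 v (h ^ n' • q) (h ^ n' • o) o
    have h9 := dist_triangle v o (b⁻¹ • o)
    have h10 : dist o (b⁻¹ • o) ≤ ∑ i : Fin 16, dist o ((a ^ (i:ℕ))⁻¹ • o) :=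
      Finset.single_le_sum (f := fun i : Fin 16 => dist o ((a ^ (i:ℕ))⁻¹ • o))
        (fun _ _ => dist_nonneg) (Finset.mem_univ i)
    rw [dist_comm (h ^ n' • o) o] at h8
    linarith

end Geometry
section Prob

variable {G : Type*} [Group G]

theorem convPow_bd {μ : G → ℝ} (hμ : IsProbMeasure μ) (n : ℕ) :
    ∀ g, 0 ≤ convPow μ n g ∧ convPow μ n g ≤ 1 := by
  induction n with
  | zero =>
    intro g
    simp only [convPow, Set.indicator]
    split_ifs <;> norm_num
  | succ n ih =>
    intro g
    have hs : Summable fun h => μ h * convPow μ n (h⁻¹ * g) :=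
      Summable.of_nonneg_of_le (fun h => mul_nonneg (hμ.1 h) (ih _).1)
        (fun h => mul_le_of_le_one_right (hμ.1 h) (ih _).2) hμ.2.1
    refine ⟨tsum_nonneg fun h => mul_nonneg (hμ.1 h) (ih _).1, ?_⟩
    change ∑' h, μ h * convPow μ n (h⁻¹ * g) ≤ 1
    rw [← hμ.2.2]
    exact hs.tsum_le_tsum (fun h => mul_le_of_le_one_right (hμ.1 h) (ih _).2) hμ.2.1

theorem ofReal_convPow_succ {μ : G → ℝ} (hμ : IsProbMeasure μ) (n : ℕ) (g : G) :
    ENNReal.ofReal (convPow μ (n + 1) g) =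
      ∑' h, ENNReal.ofReal (μ h) * ENNReal.ofReal (convPow μ n (h⁻¹ * g)) := by
  have hs : Summable fun h => μ h * convPow μ n (h⁻¹ * g) :=
    Summable.of_nonneg_of_le (fun h => mul_nonneg (hμ.1 h) (convPow_bd hμ n _).1)
      (fun h => mul_le_of_le_one_right (hμ.1 h) (convPow_bd hμ n _).2) hμ.2.1
  change ENNReal.ofReal (∑' h, μ h * convPow μ n (h⁻¹ * g)) = _
  rw [ENNReal.ofReal_tsum_of_nonneg (fun h => mul_nonneg (hμ.1 h) (convPow_bd hμ n _).1) hs]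
  exact tsum_congr fun h => ENNReal.ofReal_mul (hμ.1 h)

/-- Integral of `f` against the `n`-th convolution power. -/
noncomputable def II (μ : G → ℝ) (n : ℕ) (f : G → ENNReal) : ENNReal :=
  ∑' g, ENNReal.ofReal (convPow μ n g) * f g

theorem II_zero (μ : G → ℝ) (f : G → ENNReal) : II μ 0 f = f 1 := by
  unfold II
  rw [tsum_eq_single 1]
  · simp [convPow]
  · intro g hg
    simp [convPow, hg]

theorem II_succ {μ : G → ℝ} (hμ : IsProbMeasure μ) (n : ℕ) (f : G → ENNReal) :
    II μ (n + 1) f = ∑' h, ENNReal.ofReal (μ h) * II μ n (fun g => f (h * g)) := by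
  unfold II
  simp_rw [ofReal_convPow_succ hμ, ← ENNReal.tsum_mul_right]
  rw [ENNReal.tsum_comm]
  refine tsum_congr fun h => ?_
  rw [← ENNReal.tsum_mul_left, ← (Equiv.mulLeft h).tsum_eq]
  refine tsum_congr fun g => ?_
  simp [mul_assoc]

theorem II_mono (μ : G → ℝ) (n : ℕ) {f f' : G → ENNReal} (h : ∀ g, f g ≤ f' g) :
    II μ n f ≤ II μ n f' :=
  ENNReal.tsum_le_tsum fun g => mul_le_mul_right (h g) _

theorem II_plus (μ : G → ℝ) (n : ℕ) (f f' : G → ENNReal) :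
    II μ n (fun g => f g + f' g) = II μ n f + II μ n f' := by
  unfold II
  simp_rw [mul_add]
  exact ENNReal.tsum_add

theorem mass_one {μ : G → ℝ} (hμ : IsProbMeasure μ) : ∑' g, ENNReal.ofReal (μ g) = 1 := by
  rw [← ENNReal.ofReal_tsum_of_nonneg hμ.1 hμ.2.1, hμ.2.2, ENNReal.ofReal_one]

theorem II_const {μ : G → ℝ} (hμ : IsProbMeasure μ) (n : ℕ) (c : ENNReal) :
    II μ n (fun _ => c) = c := by
  induction n with
  | zero => rw [II_zero]
  | succ n ih => rw [II_succ hμ, ih, ENNReal.tsum_mul_right, mass_one hμ, one_mul]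

theorem II_add {μ : G → ℝ} (hμ : IsProbMeasure μ) (m n : ℕ) (f : G → ENNReal) :
    II μ (m + n) f = II μ m (fun h => II μ n (fun g => f (h * g))) := by
  induction m generalizing f with
  | zero => simp [II_zero]
  | succ m ih =>
    rw [show m + 1 + n = (m + n) + 1 by ring, II_succ hμ, II_succ hμ]
    refine tsum_congr fun h => ?_
    rw [ih]
    simp only [mul_assoc]

theorem II_one {μ : G → ℝ} (hμ : IsProbMeasure μ) (f : G → ENNReal) :
    II μ 1 f = ∑' g, ENNReal.ofReal (μ g) * f g := by
  rw [II_succ hμ]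
  simp [II_zero]

theorem convPow_pos_mul {μ : G → ℝ} (hμ : IsProbMeasure μ) {m n : ℕ} {x y : G}
    (hx : 0 < convPow μ m x) (hy : 0 < convPow μ n y) : 0 < convPow μ (m + n) (x * y) := by
  classical
  have key : ∀ k z, II μ k (fun g => if g = z then 1 else 0) = ENNReal.ofReal (convPow μ k z) := by
    intro k z
    unfold II
    rw [tsum_eq_single z]
    · simp
    · intro g hg; simp [hg]
  rw [← ENNReal.ofReal_pos, ← key, II_add hμ]
  refine lt_of_lt_of_le ?_ (ENNReal.le_tsum x)
  refine ENNReal.mul_pos (ENNReal.ofReal_pos.2 hx).ne' ?_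
  simp only [mul_right_inj]
  rw [key]
  exact (ENNReal.ofReal_pos.2 hy).ne'

theorem convPow_pos_pow {μ : G → ℝ} (hμ : IsProbMeasure μ) {m : ℕ} {x : G}
    (hx : 0 < convPow μ m x) (k : ℕ) : 0 < convPow μ (k * m) (x ^ k) := by
  induction k with
  | zero => simp [convPow]
  | succ k ih =>
    rw [pow_succ, add_mul, one_mul]
    exact convPow_pos_mul hμ ih hx

theorem convPow_one {μ : G → ℝ} (g : G) : convPow μ 1 g = μ g := by
  change ∑' h, μ h * convPow μ 0 (h⁻¹ * g) = μ g
  rw [tsum_eq_single g]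
  · simp [convPow]
  · intro h hh
    have : h⁻¹ * g ≠ 1 := fun e => hh (inv_mul_eq_one.1 e)
    simp [convPow, this]

theorem semigroup_pos {μ : G → ℝ} (hμ : IsProbMeasure μ) {g : G}
    (hg : g ∈ Subsemigroup.closure {x : G | 0 < μ x}) : ∃ p, 1 ≤ p ∧ 0 < convPow μ p g := by
  induction hg using Subsemigroup.closure_induction with
  | mem x hx => exact ⟨1, le_rfl, by rw [convPow_one]; exact hx⟩
  | mul x y _ _ hx hy =>
    obtain ⟨p, hp, h1⟩ := hx
    obtain ⟨q, hq, h2⟩ := hy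
    exact ⟨p + q, by omega, convPow_pos_mul hμ h1 h2⟩

theorem exists_tag (p : G → ENNReal) (hp : ∀ g, p g ≠ ⊤) (s : Fin 16 → G)
    (hs : ∀ i, p (s i) ≠ 0) :
    ∃ (β : ENNReal) (ν : G → ENNReal), β ≠ 0 ∧ β ≠ ⊤ ∧ ∀ f : G → ENNReal,
      ∑' g, p g * f g = ∑' g, ν g * f g + ∑ i, β * f (s i) := by
  classical
  obtain ⟨i0, hi0⟩ := Finite.exists_min fun i => p (s i)
  set β := p (s i0) / 16 with hβ
  have h16 : (16 : ENNReal) ≠ ⊤ := by simp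
  have hβ16 : 16 * β = p (s i0) := ENNReal.mul_div_cancel (by norm_num) h16
  set c : G → ENNReal := fun g => ∑ i, if g = s i then β else 0 with hc
  have hcp : ∀ g, c g ≤ p g := by
    intro g
    by_cases h : ∃ i, g = s i
    · obtain ⟨i, rfl⟩ := h
      calc c (s i) ≤ ∑ _i : Fin 16, β := by
            refine Finset.sum_le_sum fun j _ => ?_
            split_ifs <;> simp
        _ = 16 * β := by simp
        _ ≤ p (s i) := by rw [hβ16]; exact hi0 i
    · have : c g = 0 := by
        refine Finset.sum_eq_zero fun i _ => if_neg fun e => h ⟨i, e⟩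
      rw [this]; exact zero_le
  refine ⟨β, fun g => p g - c g, ?_, ?_, ?_⟩
  · intro h0; rw [h0, mul_zero] at hβ16; exact hs i0 hβ16.symm
  · exact ENNReal.div_ne_top (hp _) (by norm_num)
  · intro f
    have h1 : ∀ g, p g * f g = (p g - c g) * f g + ∑ i, (if g = s i then β else 0) * f g := by
      intro g
      rw [← Finset.sum_mul, ← add_mul, tsub_add_cancel_of_le (hcp g)]
    simp_rw [h1]
    rw [ENNReal.tsum_add]
    congr 1
    rw [Summable.tsum_finsetSum (fun _ _ => ENNReal.summable)]
    refine Finset.sum_congr rfl fun i _ => ?_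
    rw [tsum_eq_single (s i)]
    · simp
    · intro g hg; simp [hg]

variable {σ : Type*}

/-- Expectation over i.i.d. lists of length `n`. -/
noncomputable def EE (m : σ → ENNReal) : ℕ → (List σ → ENNReal) → ENNReal
  | 0, F => F []
  | n + 1, F => ∑' s, m s * EE m n (fun l => F (s :: l))

theorem EE_mono (m : σ → ENNReal) (n : ℕ) : ∀ {F F' : List σ → ENNReal}, (∀ l, F l ≤ F' l) →
    EE m n F ≤ EE m n F' := by
  induction n with
  | zero => intro F F' h; exact h []
  | succ n ih =>
    intro F F' h
    exact ENNReal.tsum_le_tsum fun s => mul_le_mul_right (ih fun l => h _) _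

theorem EE_plus (m : σ → ENNReal) (n : ℕ) : ∀ (F F' : List σ → ENNReal),
    EE m n (fun l => F l + F' l) = EE m n F + EE m n F' := by
  induction n with
  | zero => intro F F'; rfl
  | succ n ih =>
    intro F F'
    simp only [EE, ih, mul_add, ENNReal.tsum_add]

theorem EE_mul (m : σ → ENNReal) (n : ℕ) : ∀ (c : ENNReal) (F : List σ → ENNReal),
    EE m n (fun l => c * F l) = c * EE m n F := by
  induction n with
  | zero => intro F F'; rfl
  | succ n ih =>
    intro c F
    simp only [EE, ih, ← ENNReal.tsum_mul_left]
    exact tsum_congr fun s => by ring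

theorem EE_const (m : σ → ENNReal) (hm : ∑' s, m s = 1) (n : ℕ) (c : ENNReal) :
    EE m n (fun _ => c) = c := by
  induction n with
  | zero => rfl
  | succ n ih => simp only [EE, ih, ENNReal.tsum_mul_right, hm, one_mul]

theorem EE_tsum {τ : Type*} (m : σ → ENNReal) (n : ℕ) : ∀ (F : τ → List σ → ENNReal),
    EE m n (fun l => ∑' t, F t l) = ∑' t, EE m n (F t) := by
  induction n with
  | zero => intro F; rfl
  | succ n ih =>
    intro F
    simp only [EE, ih, ← ENNReal.tsum_mul_left]
    exact ENNReal.tsum_comm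

variable {X : Type*} [MetricSpace X] [MulAction G X]

/-- Product of the steps. -/
def ZZ (val : σ → G) : List σ → G
  | [] => 1
  | s :: l => val s * ZZ val l

/-- Forward potential. -/
noncomputable def PA (val : σ → G) (c : σ → ENNReal) (w : X → σ → ENNReal) :
    List σ → X → ENNReal
  | [], _ => 0
  | s :: l, x => c s + w x s * PA val c w l ((val s)⁻¹ • x)

/-- Backward potential. -/
noncomputable def PB (o : X) (val : σ → G) (c : σ → ENNReal) (w : σ → X → ENNReal) :
    List σ → ENNReal
  | [] => 0
  | s :: l => c s + w s (ZZ val l • o) * PB o val c w l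

theorem EE_PA (m : σ → ENNReal) (hm : ∑' s, m s = 1) (val : σ → G) (c : σ → ENNReal)
    (w : X → σ → ENNReal) (Λ ρ Q : ENNReal) (hΛ : ∑' s, m s * c s ≤ Λ)
    (hρ : ∀ x, ∑' s, m s * w x s ≤ ρ) (hQ : Λ + ρ * Q ≤ Q) (n : ℕ) :
    ∀ x, EE m n (fun l => PA val c w l x) ≤ Q := by
  induction n with
  | zero => intro x; exact zero_le
  | succ n ih =>
    intro x
    simp only [EE, PA]
    calc ∑' s, m s * EE m n (fun l => c s + w x s * PA val c w l ((val s)⁻¹ • x))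
        ≤ ∑' s, (m s * c s + m s * w x s * Q) := by
          refine ENNReal.tsum_le_tsum fun s => ?_
          rw [EE_plus, EE_const m hm, EE_mul, mul_add, mul_assoc]
          gcongr
          exact ih _
      _ = ∑' s, m s * c s + (∑' s, m s * w x s) * Q := by
          rw [ENNReal.tsum_add, ENNReal.tsum_mul_right]
      _ ≤ Λ + ρ * Q := by gcongr; exact hρ x
      _ ≤ Q := hQ

theorem EE_PB (o : X) (m : σ → ENNReal) (hm : ∑' s, m s = 1) (val : σ → G) (c : σ → ENNReal)
    (w : σ → X → ENNReal) (Λ ρ Q : ENNReal) (hΛ : ∑' s, m s * c s ≤ Λ)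
    (hρ : ∀ x, ∑' s, m s * w s x ≤ ρ) (hQ : Λ + ρ * Q ≤ Q) (n : ℕ) :
    EE m n (PB o val c w) ≤ Q := by
  induction n with
  | zero => exact zero_le
  | succ n ih =>
    simp only [EE, PB]
    calc ∑' s, m s * EE m n (fun l => c s + w s (ZZ val l • o) * PB o val c w l)
        = ∑' s, m s * c s +
          ∑' s, EE m n (fun l => m s * (w s (ZZ val l • o) * PB o val c w l)) := by
          rw [← ENNReal.tsum_add]
          refine tsum_congr fun s => ?_
          rw [EE_plus, EE_const m hm, EE_mul, mul_add]
      _ = ∑' s, m s * c s +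
          EE m n (fun l => ∑' s, m s * (w s (ZZ val l • o) * PB o val c w l)) := by
          rw [EE_tsum]
      _ ≤ Λ + EE m n (fun l => ρ * PB o val c w l) := by
          gcongr
          refine EE_mono m n fun l => ?_
          simp_rw [← mul_assoc]
          rw [ENNReal.tsum_mul_right]
          gcongr
          exact hρ _
      _ ≤ Λ + ρ * Q := by rw [EE_mul]; gcongr
      _ ≤ Q := hQ

/-- Twice the Gromov product based at `o`. -/
noncomputable def gpy (o x z : X) : ENNReal := ENNReal.ofReal (dist x o + dist o z - dist x z)

theorem gpy_step [IsIsometricSMul G X] (o x z : X) (g : G) :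
    gpy o x (g • z) ≤ 2 * ENNReal.ofReal (dist o (g • o)) + gpy o (g⁻¹ • x) z := by
  have h2 : (2 : ENNReal) = ENNReal.ofReal 2 := by simp
  unfold gpy
  rw [h2, ← ENNReal.ofReal_mul (by norm_num)]
  refine le_trans (ENNReal.ofReal_le_ofReal ?_) ENNReal.ofReal_add_le
  have h1 : dist (g⁻¹ • x) z = dist x (g • z) := by rw [← dist_smul g, smul_inv_smul]
  have h3 : dist (g⁻¹ • x) o = dist x (g • o) := by rw [← dist_smul g, smul_inv_smul]
  have h4 := dist_triangle x (g • o) o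
  have h5 := dist_triangle o (g • o) (g • z)
  rw [dist_smul] at h5
  rw [dist_comm (g • o) o] at h4
  rw [h1, h3]
  linarith

theorem pointwise_bound [IsIsometricSMul G X] (o : X) (val : σ → G) (wA : X → σ → ENNReal)
    (wB : σ → X → ENNReal) (C : ENNReal)
    (hgood : ∀ x s y, 1 ≤ wA x s * wB s y ∨ gpy o x (val s • y) ≤ C) (l : List σ) :
    ∀ (x : X) (a b : ENNReal), 1 ≤ a * b →
      gpy o x (ZZ val l • o) ≤ C +
        (a * PA val (fun s => 2 * ENNReal.ofReal (dist o (val s • o))) wA l x +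
        b * PB o val (fun s => 2 * ENNReal.ofReal (dist o (val s • o))) wB l) := by
  induction l with
  | nil =>
    intro x a b _
    simp [ZZ, gpy]
  | cons s l ih =>
    intro x a b hab
    simp only [ZZ, PA, PB, mul_smul]
    rcases hgood x s (ZZ val l • o) with h | h
    · set c := 2 * ENNReal.ofReal (dist o (val s • o)) with hc
      have h1 : 1 ≤ a + b := by
        rcases le_total 1 a with h | h
        · exact h.trans le_self_add
        · calc 1 ≤ a * b := hab
            _ ≤ 1 * b := by gcongr
            _ ≤ a + b := by rw [one_mul]; exact le_add_self
      have h2 : 1 ≤ (a * wA x s) * (b * wB s (ZZ val l • o)) := by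
        calc (1 : ENNReal) = 1 * 1 := by simp
          _ ≤ (a * b) * (wA x s * wB s (ZZ val l • o)) := mul_le_mul' hab h
          _ = _ := by ring
      refine (gpy_step o x (ZZ val l • o) (val s)).trans ?_
      refine (add_le_add_right (ih ((val s)⁻¹ • x) _ _ h2) c).trans ?_
      have h3 : c ≤ (a + b) * c := by
        calc c = 1 * c := by simp
          _ ≤ _ := by gcongr
      refine (add_le_add_left h3 _).trans (le_of_eq ?_)
      ring
    · exact h.trans le_self_add

end Prob
section Final

variable {G : Type*} [Group G] {X : Type*} [MetricSpace X] [MulAction G X]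

theorem sum_weights (P : Fin 16 → Prop) [DecidablePred P]
    (hP : ∀ i j, ¬ P i → ¬ P j → i = j) :
    ∑ i, (if P i then (4⁻¹ : ENNReal) else 4) ≤ 8 := by
  have h1 : ∑ i, (if P i then (4⁻¹ : ENNReal) else 4) ≤
      ∑ i : Fin 16, ((4⁻¹ : ENNReal) + if ¬ P i then 4 else 0) := by
    refine Finset.sum_le_sum fun i _ => ?_
    by_cases h : P i <;> simp [h]
  refine h1.trans ?_
  rw [Finset.sum_add_distrib]
  have h2 : ∑ _i : Fin 16, (4⁻¹ : ENNReal) = 4 := by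
    simp only [Finset.sum_const, Finset.card_univ, Fintype.card_fin, nsmul_eq_mul]
    have : ((16 : ℕ) : ENNReal) = 4 * 4 := by norm_num
    rw [this, mul_assoc, ENNReal.mul_inv_cancel (by norm_num) (by simp), mul_one]
  have h3 : ∑ i : Fin 16, (if ¬ P i then (4 : ENNReal) else 0) ≤ 4 := by
    by_cases h : ∃ i, ¬ P i
    · obtain ⟨i, hi⟩ := h
      rw [Finset.sum_eq_single i]
      · simp [hi]
      · intro j _ hj
        by_cases hPj : P j
        · simp [hPj]
        · exact absurd (hP j i hPj hi) hj
      · simp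
    · push Not at h
      simp [h]
  rw [h2]
  calc (4 : ENNReal) + ∑ i : Fin 16, (if ¬ P i then (4 : ENNReal) else 0) ≤ 4 + 4 := by gcongr
    _ = 8 := by norm_num

/-- Length of the displacement. -/
noncomputable def nrm (o : X) (g : G) : ENNReal := ENNReal.ofReal (dist o (g • o))

theorem nrm_mul [IsIsometricSMul G X] (o : X) (g h : G) : nrm o (g * h) ≤ nrm o g + nrm o h := by
  unfold nrm
  rw [← ENNReal.ofReal_add dist_nonneg dist_nonneg]
  refine ENNReal.ofReal_le_ofReal ?_
  have := dist_triangle o (g • o) (g • (h • o))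
  rw [dist_smul] at this
  rwa [mul_smul]

theorem II_nrm_lt [IsIsometricSMul G X] (o : X) {μ : G → ℝ} (hμ : IsProbMeasure μ)
    (hL : HasFiniteFirstMoment o μ) (n : ℕ) : II μ n (nrm o) ≠ ⊤ := by
  induction n with
  | zero => rw [II_zero]; exact ENNReal.ofReal_ne_top
  | succ n ih =>
    have h1 : ∑' g, ENNReal.ofReal (μ g) * nrm o g ≠ ⊤ := by
      have : ∀ g, ENNReal.ofReal (μ g) * nrm o g = ENNReal.ofReal (μ g * dist o (g • o)) :=
        fun g => (ENNReal.ofReal_mul (hμ.1 g)).symm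
      simp_rw [this]
      exact hL.tsum_ofReal_ne_top
    have h2 : II μ (n + 1) (nrm o) ≤ ∑' g, ENNReal.ofReal (μ g) * nrm o g + II μ n (nrm o) := by
      rw [II_succ hμ]
      calc ∑' h, ENNReal.ofReal (μ h) * II μ n (fun g => nrm o (h * g))
          ≤ ∑' h, (ENNReal.ofReal (μ h) * nrm o h + ENNReal.ofReal (μ h) * II μ n (nrm o)) := by
            refine ENNReal.tsum_le_tsum fun h => ?_
            rw [← mul_add]
            gcongr
            calc II μ n (fun g => nrm o (h * g)) ≤ II μ n (fun g => nrm o h + nrm o g) :=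
                  II_mono μ n fun g => nrm_mul o h g
              _ = nrm o h + II μ n (nrm o) := by rw [II_plus, II_const hμ]
        _ = _ := by rw [ENNReal.tsum_add, ENNReal.tsum_mul_right, mass_one hμ, one_mul]
    exact ne_top_of_le_ne_top (ENNReal.add_ne_top.2 ⟨h1, ih⟩) h2

theorem gpy_move [IsIsometricSMul G X] (o x : X) (g h : G) :
    gpy o x ((g * h) • o) ≤ gpy o x (g • o) + 2 * nrm o h := by
  have h2 : (2 : ENNReal) = ENNReal.ofReal 2 := by simp
  unfold gpy nrm
  rw [h2, ← ENNReal.ofReal_mul (by norm_num)]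
  refine le_trans (ENNReal.ofReal_le_ofReal ?_) ENNReal.ofReal_add_le
  rw [mul_smul]
  have h1 : dist (g • o) (g • h • o) = dist o (h • o) := dist_smul _ _ _
  have h4 := dist_triangle o (g • o) (g • h • o)
  have h5 := dist_triangle x (g • h • o) (g • o)
  rw [dist_comm (g • h • o)] at h5
  linarith

theorem key_bound [IsIsometricSMul G X] (o : X) (hgeo : IsGeodesicSpace X)
    {μ : G → ℝ} (hμ : IsProbMeasure μ) (hne : NonElementary o μ)
    (hL : HasFiniteFirstMoment o μ) :
    ∃ C : ENNReal, C ≠ ⊤ ∧ ∀ n x, II μ n (fun g => gpy o x (g • o)) ≤ C := by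
  classical
  obtain ⟨g, h, hg, hh, hgh⟩ := hne
  obtain ⟨p, hp1, hp⟩ := semigroup_pos hμ hg
  obtain ⟨q, hq1, hq⟩ := semigroup_pos hμ hh
  obtain ⟨n, n', hn1, C0, A, B, hA, hB, hAB⟩ := schottky_s1 hgeo o g h hgh
  set s : Fin 16 → G := fun i => (g ^ n) ^ (i : ℕ) * h ^ n' * (g ^ n) ^ (16 - (i : ℕ)) with hs
  set N : ℕ := 16 * (n * p) + n' * q with hN
  have hN1 : 1 ≤ N := by
    have : 1 ≤ n * p := Nat.one_le_iff_ne_zero.2 (Nat.mul_ne_zero (by omega) (by omega))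
    omega
  have hspos : ∀ i, 0 < convPow μ N (s i) := by
    intro i
    have h1 := convPow_pos_pow hμ (convPow_pos_pow hμ hp n) (i : ℕ)
    have h2 := convPow_pos_pow hμ hq n'
    have h3 := convPow_pos_pow hμ (convPow_pos_pow hμ hp n) (16 - (i : ℕ))
    have h4 := convPow_pos_mul hμ (convPow_pos_mul hμ h1 h2) h3
    have : (i : ℕ) * (n * p) + n' * q + (16 - (i : ℕ)) * (n * p) = N := by
      have hi : (i : ℕ) + (16 - (i : ℕ)) = 16 := by have := i.2; omega
      calc _ = ((i : ℕ) + (16 - (i : ℕ))) * (n * p) + n' * q := by ring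
        _ = N := by rw [hi]
    rwa [this] at h4
  obtain ⟨β, ν, hβ0, hβt, htag⟩ := exists_tag (fun g => ENNReal.ofReal (convPow μ N g))
    (fun _ => ENNReal.ofReal_ne_top) s (fun i => (ENNReal.ofReal_pos.2 (hspos i)).ne')
  have htag' : ∀ f, II μ N f = ∑' g, ν g * f g + ∑ i, β * f (s i) := htag
  have hmass : ∑' g, ν g + 16 * β = 1 := by
    have := htag' (fun _ => 1)
    rw [II_const hμ] at this
    rw [this]; simp
  set m : G ⊕ Fin 16 → ENNReal := Sum.elim ν (fun _ => β) with hm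
  set val : G ⊕ Fin 16 → G := Sum.elim id s with hval
  have hsum : ∀ F : G ⊕ Fin 16 → ENNReal, ∑' t, m t * F t =
      ∑' g, ν g * F (Sum.inl g) + ∑ i, β * F (Sum.inr i) := by
    intro F
    rw [Summable.tsum_sum ENNReal.summable ENNReal.summable, tsum_fintype (L := .unconditional (Fin 16))]
    rfl
  have hm1 : ∑' t, m t = 1 := by
    have := hsum (fun _ => 1)
    simp only [mul_one] at this
    rw [this, ← hmass]; simp
  have hII : ∀ f, II μ N f = ∑' t, m t * f (val t) := by
    intro f; rw [htag', hsum]; rfl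
  have hEE : ∀ k f, II μ (N * k) f = EE m k (fun l => f (ZZ val l)) := by
    intro k
    induction k with
    | zero => intro f; simp [II_zero, EE, ZZ]
    | succ k ih =>
      intro f
      rw [show N * (k + 1) = N + N * k by ring, II_add hμ, hII]
      simp only [ih, EE, ZZ]
  set wA : X → G ⊕ Fin 16 → ENNReal :=
    fun x t => Sum.elim (fun _ => 1) (fun i => if A x i then 4⁻¹ else 4) t with hwA
  set wB : G ⊕ Fin 16 → X → ENNReal :=
    fun t x => Sum.elim (fun _ => 1) (fun i => if B i x then 4⁻¹ else 4) t with hwB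
  set ρ : ENNReal := ∑' g, ν g + 8 * β with hρ
  have hρA : ∀ x, ∑' t, m t * wA x t ≤ ρ := by
    intro x
    rw [hsum]
    simp only [hwA, Sum.elim_inl, Sum.elim_inr, mul_one, ← Finset.mul_sum]
    rw [hρ, mul_comm 8 β]
    gcongr
    exact sum_weights _ (hA x)
  have hρB : ∀ x, ∑' t, m t * wB t x ≤ ρ := by
    intro x
    rw [hsum]
    simp only [hwB, Sum.elim_inl, Sum.elim_inr, mul_one, ← Finset.mul_sum]
    rw [hρ, mul_comm 8 β]
    gcongr
    exact sum_weights _ (hB x)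
  have hρ1 : 8 * β + ρ = 1 := by
    rw [hρ, ← hmass, add_left_comm, ← add_mul]; norm_num
  set Λ : ENNReal := 2 * II μ N (nrm o) with hΛ
  have hΛt : Λ ≠ ⊤ := ENNReal.mul_ne_top (by simp) (II_nrm_lt o hμ hL N)
  have hΛc : ∑' t, m t * (2 * ENNReal.ofReal (dist o (val t • o))) ≤ Λ := by
    rw [hΛ, hII, ← ENNReal.tsum_mul_left]
    refine le_of_eq (tsum_congr fun t => ?_)
    unfold nrm; ring
  have h8β0 : 8 * β ≠ 0 := mul_ne_zero (by norm_num) hβ0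
  have h8βt : 8 * β ≠ ⊤ := ENNReal.mul_ne_top (by simp) hβt
  set Q : ENNReal := Λ / (8 * β) with hQd
  have hQt : Q ≠ ⊤ := ENNReal.div_ne_top hΛt h8β0
  have hQ : Λ + ρ * Q ≤ Q := by
    have : Λ = 8 * β * Q := (ENNReal.mul_div_cancel h8β0 h8βt).symm
    calc Λ + ρ * Q = 8 * β * Q + ρ * Q := by rw [← this]
      _ = Q := by rw [← add_mul, hρ1, one_mul]
      _ ≤ Q := le_rfl
  set C1 : ENNReal := ENNReal.ofReal C0 with hC1
  have h44 : (4⁻¹ : ENNReal) * 4 = 1 := ENNReal.inv_mul_cancel (by norm_num) (by simp)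
  have hgood : ∀ x t y, 1 ≤ wA x t * wB t y ∨ gpy o x (val t • y) ≤ C1 := by
    intro x t y
    rcases t with g | i
    · left; simp [hwA, hwB]
    · by_cases h1 : A x i
      · by_cases h2 : B i y
        · right
          refine ENNReal.ofReal_le_ofReal ?_
          have := hAB x i y h1 h2
          simp only [hval, Sum.elim_inr]
          linarith
        · left; simp [hwA, hwB, h1, h2, h44]
      · left
        by_cases h2 : B i y
        · simp [hwA, hwB, h1, h2, mul_comm (4 : ENNReal), h44]
        · simp only [hwA, hwB, h1, h2, Sum.elim_inr, if_false]; norm_num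
  have hblock : ∀ k x, II μ (N * k) (fun g => gpy o x (g • o)) ≤ C1 + (Q + Q) := by
    intro k x
    rw [hEE]
    refine (EE_mono m k fun l =>
      pointwise_bound o val wA wB C1 hgood l x 1 1 (by simp)).trans ?_
    rw [EE_plus, EE_const m hm1, EE_plus, EE_mul, EE_mul, one_mul, one_mul]
    gcongr
    · exact EE_PA m hm1 val _ wA Λ ρ Q hΛc hρA hQ k x
    · exact EE_PB o m hm1 val _ wB Λ ρ Q hΛc hρB hQ k
  refine ⟨C1 + (Q + Q) + ∑ r ∈ Finset.range N, 2 * II μ r (nrm o), ?_, ?_⟩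
  · refine ENNReal.add_ne_top.2 ⟨ENNReal.add_ne_top.2 ⟨ENNReal.ofReal_ne_top,
      ENNReal.add_ne_top.2 ⟨hQt, hQt⟩⟩, ?_⟩
    exact (ENNReal.sum_ne_top).2 fun r _ => ENNReal.mul_ne_top (by simp) (II_nrm_lt o hμ hL r)
  · intro n x
    have hnN : n = N * (n / N) + n % N := (Nat.div_add_mod n N).symm
    rw [hnN, II_add hμ]
    have h1 : ∀ a, II μ (n % N) (fun b => gpy o x ((a * b) • o)) ≤
        gpy o x (a • o) + 2 * II μ (n % N) (nrm o) := by
      intro a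
      calc II μ (n % N) (fun b => gpy o x ((a * b) • o))
          ≤ II μ (n % N) (fun b => gpy o x (a • o) + (nrm o b + nrm o b)) :=
            II_mono _ _ fun b => by rw [← two_mul]; exact gpy_move o x a b
        _ = _ := by rw [II_plus, II_const hμ, II_plus, two_mul]
    refine (II_mono _ _ h1).trans ?_
    rw [II_plus, II_const hμ]
    refine add_le_add (hblock _ x) ?_
    exact Finset.single_le_sum (f := fun r => 2 * II μ r (nrm o)) (fun _ _ => zero_le)
      (Finset.mem_range.2 (Nat.mod_lt _ hN1))

theorem compare_one {p q : G → ℝ} (hp : IsProbMeasure p) (hq : IsProbMeasure q)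
    (φ w : G → ENNReal) (c : ENNReal) (h1 : ∀ g, φ g ≤ c + w g) (h2 : ∀ g, c ≤ φ g + w g) :
    ∑' g, ENNReal.ofReal (p g) * φ g ≤
      ∑' g, ENNReal.ofReal (q g) * φ g + ∑' g, ENNReal.ofReal |p g - q g| * w g := by
  have dec : ∀ {p q : G → ℝ}, IsProbMeasure p → IsProbMeasure q → ∀ g,
      ENNReal.ofReal (p g) = ENNReal.ofReal (min (p g) (q g)) + ENNReal.ofReal (p g - q g) := by
    intro p q hp hq g
    rcases le_total (p g) (q g) with h | h
    · rw [min_eq_left h, ENNReal.ofReal_of_nonpos (by linarith : p g - q g ≤ 0), add_zero]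
    · rw [min_eq_right h, ← ENNReal.ofReal_add (hq.1 g) (by linarith)]
      congr 1; ring
  have dabs : ∀ g, ENNReal.ofReal |p g - q g| =
      ENNReal.ofReal (p g - q g) + ENNReal.ofReal (q g - p g) := by
    intro g
    rcases le_total (p g) (q g) with h | h
    · rw [abs_of_nonpos (by linarith), ENNReal.ofReal_of_nonpos (by linarith : p g - q g ≤ 0),
        zero_add]
      congr 1; ring
    · rw [abs_of_nonneg (by linarith), ENNReal.ofReal_of_nonpos (by linarith : q g - p g ≤ 0),
        add_zero]
  have dp := dec hp hq
  have dq : ∀ g, ENNReal.ofReal (q g) =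
      ENNReal.ofReal (min (p g) (q g)) + ENNReal.ofReal (q g - p g) := by
    intro g; rw [min_comm]; exact dec hq hp g
  set M := ∑' g, ENNReal.ofReal (min (p g) (q g)) with hM
  have mp : M + ∑' g, ENNReal.ofReal (p g - q g) = 1 := by
    rw [← mass_one hp, hM, ← ENNReal.tsum_add]
    exact tsum_congr fun g => (dp g).symm
  have mq : M + ∑' g, ENNReal.ofReal (q g - p g) = 1 := by
    rw [← mass_one hq, hM, ← ENNReal.tsum_add]
    exact tsum_congr fun g => (dq g).symm
  have hMt : M ≠ ⊤ := by
    intro h; rw [h] at mp; simp at mp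
  have heq : ∑' g, ENNReal.ofReal (p g - q g) = ∑' g, ENNReal.ofReal (q g - p g) :=
    (ENNReal.add_right_inj hMt).1 (mp.trans mq.symm)
  calc ∑' g, ENNReal.ofReal (p g) * φ g
      = ∑' g, ENNReal.ofReal (min (p g) (q g)) * φ g + ∑' g, ENNReal.ofReal (p g - q g) * φ g := by
        rw [← ENNReal.tsum_add]
        exact tsum_congr fun g => by rw [dp g, add_mul]
    _ ≤ ∑' g, ENNReal.ofReal (min (p g) (q g)) * φ g +
        ∑' g, ENNReal.ofReal (p g - q g) * (c + w g) := by
        gcongr with g; exact h1 g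
    _ = ∑' g, ENNReal.ofReal (min (p g) (q g)) * φ g +
        (∑' g, ENNReal.ofReal (q g - p g) * c + ∑' g, ENNReal.ofReal (p g - q g) * w g) := by
        simp_rw [mul_add]
        rw [ENNReal.tsum_add, ENNReal.tsum_mul_right, heq, ENNReal.tsum_mul_right]
    _ ≤ ∑' g, ENNReal.ofReal (min (p g) (q g)) * φ g +
        (∑' g, ENNReal.ofReal (q g - p g) * (φ g + w g) +
          ∑' g, ENNReal.ofReal (p g - q g) * w g) := by
        gcongr with g; exact h2 g
    _ = ∑' g, ENNReal.ofReal (q g) * φ g + ∑' g, ENNReal.ofReal |p g - q g| * w g := by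
        simp_rw [dabs, dq, add_mul, mul_add, ENNReal.tsum_add]
        ring

theorem nrm_insert [IsIsometricSMul G X] (o : X) (a g b : G) :
    nrm o (a * b) ≤ nrm o (a * g * b) + (nrm o g + gpy o ((a * g)⁻¹ • o) (b • o)) := by
  unfold nrm gpy
  have e1 : dist o ((a * g * b) • o) = dist ((a * g)⁻¹ • o) (b • o) := by
    rw [← dist_smul (a * g) ((a * g)⁻¹ • o), smul_inv_smul, mul_smul (a * g) b o]
  have e2 : dist ((a * g)⁻¹ • o) o = dist o ((a * g) • o) := by
    rw [← dist_smul (a * g), smul_inv_smul]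
  have h1 := dist_triangle o (a • o) (a • b • o)
  have h2 := dist_triangle o ((a * g) • o) (a • o)
  have e3 : dist ((a * g) • o) (a • o) = dist o (g • o) := by
    rw [mul_smul, dist_smul, dist_comm]
  have e4 : dist (a • o) (a • b • o) = dist o (b • o) := dist_smul _ _ _
  have e5 : (a * b) • o = a • b • o := mul_smul _ _ _
  have hr : dist o ((a * b) • o) ≤ dist o ((a * g * b) • o) + (dist o (g • o) +
      (dist ((a * g)⁻¹ • o) o + dist o (b • o) - dist ((a * g)⁻¹ • o) (b • o))) := by
    rw [e1, e2, e5]; linarith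
  refine (ENNReal.ofReal_le_ofReal hr).trans (ENNReal.ofReal_add_le.trans ?_)
  gcongr
  exact ENNReal.ofReal_add_le

theorem firstMoment_eq (o : X) {μ : G → ℝ} (hμ : IsProbMeasure μ) (n : ℕ) :
    firstMoment o (convPow μ n) = (II μ n (nrm o)).toReal := by
  unfold firstMoment II
  rw [ENNReal.tsum_toReal_eq]
  · refine tsum_congr fun g => ?_
    rw [nrm, ENNReal.toReal_mul, ENNReal.toReal_ofReal (convPow_bd hμ n g).1,
      ENNReal.toReal_ofReal dist_nonneg]
  · intro g
    exact ENNReal.mul_ne_top ENNReal.ofReal_ne_top ENNReal.ofReal_ne_top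

end Final
/-- Lipschitz continuity of the escape rate (Theorem 1.2). -/
theorem escape_rate_lipschitz
    {G X : Type*} [Group G] [Countable G] [MetricSpace X] [MulAction G X]
    (o : X) (hgeo : IsGeodesicSpace X)
    (hiso : ∀ g : G, Isometry fun x : X => g • x)
    (hind : HasIndepContracting G o)
    (μ : G → ℝ) (hμ : IsProbMeasure μ) (hne : NonElementary o μ)
    (hL : HasFiniteFirstMoment o μ) :
    ∃ C : ℝ, 0 < C ∧ ∃ ε : ℝ, 0 < ε ∧
      ∀ μ' : G → ℝ, IsProbMeasure μ' →
        enorm01 o (fun g => μ' g - μ g) < ENNReal.ofReal ε →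
        |escapeRate o μ' - escapeRate o μ| ≤
          C * (enorm01 o (fun g => μ' g - μ g)).toReal := by
  haveI : IsIsometricSMul G X := ⟨hiso⟩
  obtain ⟨C, hCt, hC⟩ := key_bound o hgeo hμ hne hL
  refine ⟨(C + 1).toReal, ENNReal.toReal_pos (by simp) (by simp [hCt]), 1, one_pos, ?_⟩
  intro μ' hμ' hε
  set e := enorm01 o (fun g => μ' g - μ g) with he
  have het : e ≠ ⊤ := ne_top_of_lt hε
  set e' := (C + 1) * e with he'
  have he't : e' ≠ ⊤ := ENNReal.mul_ne_top (by simp [hCt]) het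
  set F : ℕ → G → ENNReal := fun m a => II μ m (fun b => nrm o (a * b)) with hF
  have hFs : ∀ m a, F (m + 1) a = ∑' g, ENNReal.ofReal (μ g) * F m (a * g) := by
    intro m a
    simp only [hF]
    rw [II_succ hμ]
    simp only [mul_assoc]
  have hins : ∀ m a g, F m a ≤ F m (a * g) + (nrm o g + C) := by
    intro m a g
    refine (II_mono μ m fun b => nrm_insert o a g b).trans ?_
    rw [II_plus, II_plus, II_const hμ]
    gcongr
    exact hC m _
  have hinv : ∀ g : G, nrm o g⁻¹ = nrm o g := by
    intro g
    unfold nrm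
    rw [← dist_smul g, smul_inv_smul, dist_comm]
  have hins' : ∀ m a g, F m (a * g) ≤ F m a + (nrm o g + C) := by
    intro m a g
    have := hins m (a * g) g⁻¹
    rwa [mul_inv_cancel_right, hinv] at this
  have hw : ∑' g, ENNReal.ofReal |μ' g - μ g| * (nrm o g + C) ≤ e' := by
    rw [he', he, enorm01, ← ENNReal.tsum_mul_left]
    refine ENNReal.tsum_le_tsum fun g => ?_
    rw [ENNReal.ofReal_mul (by positivity), ENNReal.ofReal_add zero_le_one dist_nonneg,
      ENNReal.ofReal_one, mul_comm (1 + _), mul_left_comm]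
    gcongr
    change nrm o g + C ≤ (C + 1) * (1 + nrm o g)
    calc nrm o g + C ≤ nrm o g + C + (C * nrm o g + 1) := le_self_add
      _ = _ := by ring
  have hw' : ∑' g, ENNReal.ofReal |μ g - μ' g| * (nrm o g + C) ≤ e' := by
    simp_rw [abs_sub_comm (μ _) (μ' _)]
    exact hw
  have up : ∀ n m, II μ' n (F m) ≤ F (m + n) 1 + n * e' := by
    intro n
    induction n with
    | zero => intro m; simp [II_zero]
    | succ n ih =>
      intro m
      rw [II_add hμ']
      calc II μ' n (fun h => II μ' 1 (fun g => F m (h * g)))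
          ≤ II μ' n (fun h => F (m + 1) h + e') := by
            refine II_mono _ _ fun a => ?_
            rw [II_one hμ', hFs]
            exact (compare_one hμ' hμ (fun g => F m (a * g)) (fun g => nrm o g + C) (F m a)
              (hins' m a) (hins m a)).trans (by gcongr)
        _ = II μ' n (F (m + 1)) + e' := by rw [II_plus, II_const hμ']
        _ ≤ F (m + 1 + n) 1 + n * e' + e' := by gcongr; exact ih _
        _ = _ := by
          rw [show m + 1 + n = m + (n + 1) by ring]
          push_cast; ring
  have down : ∀ n m, F (m + n) 1 ≤ II μ' n (F m) + n * e' := by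
    intro n
    induction n with
    | zero => intro m; simp [II_zero]
    | succ n ih =>
      intro m
      rw [II_add hμ']
      calc F (m + (n + 1)) 1 = F (m + 1 + n) 1 := by rw [show m + 1 + n = m + (n + 1) by ring]
        _ ≤ II μ' n (F (m + 1)) + n * e' := ih _
        _ ≤ II μ' n (fun h => II μ' 1 (fun g => F m (h * g)) + e') + n * e' := by
            gcongr
            refine II_mono _ _ fun a => ?_
            rw [II_one hμ', hFs]
            exact (compare_one hμ hμ' (fun g => F m (a * g)) (fun g => nrm o g + C) (F m a)
              (hins' m a) (hins m a)).trans (by gcongr)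
        _ = _ := by
          rw [II_plus, II_const hμ']
          push_cast; ring
  have hF0 : F 0 = nrm o := by
    funext a; simp [hF, II_zero]
  have hFn : ∀ n, F n 1 = II μ n (nrm o) := by
    intro n; simp [hF]
  have up' : ∀ n, II μ' n (nrm o) ≤ II μ n (nrm o) + n * e' := by
    intro n
    have := up n 0
    rwa [hF0, zero_add, hFn] at this
  have down' : ∀ n, II μ n (nrm o) ≤ II μ' n (nrm o) + n * e' := by
    intro n
    have := down n 0
    rwa [hF0, zero_add, hFn] at this
  have hne' : ∀ n : ℕ, (n : ENNReal) * e' ≠ ⊤ := fun n =>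
    ENNReal.mul_ne_top (ENNReal.natCast_ne_top n) he't
  have ht : ∀ n, II μ n (nrm o) ≠ ⊤ := II_nrm_lt o hμ hL
  have ht' : ∀ n, II μ' n (nrm o) ≠ ⊤ := fun n =>
    ne_top_of_le_ne_top (ENNReal.add_ne_top.2 ⟨ht n, hne' n⟩) (up' n)
  have he'r : e'.toReal = (C + 1).toReal * e.toReal := ENNReal.toReal_mul
  rw [← he'r]
  have ru : ∀ n : ℕ, firstMoment o (convPow μ' n) ≤ firstMoment o (convPow μ n) + n * e'.toReal := by
    intro n
    rw [firstMoment_eq o hμ, firstMoment_eq o hμ']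
    have := ENNReal.toReal_mono (ENNReal.add_ne_top.2 ⟨ht n, hne' n⟩) (up' n)
    rwa [ENNReal.toReal_add (ht n) (hne' n), ENNReal.toReal_mul, ENNReal.toReal_natCast] at this
  have rd : ∀ n : ℕ, firstMoment o (convPow μ n) ≤ firstMoment o (convPow μ' n) + n * e'.toReal := by
    intro n
    rw [firstMoment_eq o hμ, firstMoment_eq o hμ']
    have := ENNReal.toReal_mono (ENNReal.add_ne_top.2 ⟨ht' n, hne' n⟩) (down' n)
    rwa [ENNReal.toReal_add (ht' n) (hne' n), ENNReal.toReal_mul, ENNReal.toReal_natCast] at this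
  have gen : ∀ u v : ℕ → ℝ, (∀ n, 0 ≤ u n) →
      (∀ n : ℕ, u n ≤ v n + n * e'.toReal) →
      ⨅ n : ℕ, u (n + 1) / (n + 1 : ℝ) ≤ (⨅ n : ℕ, v (n + 1) / (n + 1 : ℝ)) + e'.toReal := by
    intro u v hu huv
    rw [← sub_le_iff_le_add]
    refine le_ciInf fun n => ?_
    rw [sub_le_iff_le_add]
    refine (ciInf_le ⟨0, ?_⟩ n).trans ?_
    · rintro _ ⟨k, rfl⟩
      exact div_nonneg (hu _) (by positivity)
    · have hpos : (0 : ℝ) < n + 1 := by positivity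
      have := huv (n + 1)
      push_cast at this
      rw [div_add' _ _ _ hpos.ne', div_le_div_iff_of_pos_right hpos]
      linarith
  have n1 : ∀ n, 0 ≤ firstMoment o (convPow μ n) := fun n => by
    rw [firstMoment_eq o hμ]; exact ENNReal.toReal_nonneg
  have n2 : ∀ n, 0 ≤ firstMoment o (convPow μ' n) := fun n => by
    rw [firstMoment_eq o hμ']; exact ENNReal.toReal_nonneg
  have g1 := gen _ _ n2 ru
  have g2 := gen _ _ n1 rd
  unfold escapeRate
  rw [abs_le]
  constructor <;> linarith
end
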